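/- arXiv:0808.0752 — 10 statements merged into one kernel-verified Lean document; each statement's English description precedes it below -/
import Mathlib

section
/- Let G be a group and let c₁, c₂, c₃, c₄, c₅, x, δ ∈ G. Assume: the braid relations c₁*c₂*c₁ = c₂*c₁*c₂ and c₄*c₅*c₄ = c₅*c₄*c₅; the chain relation (c₅*c₄)^6 = δ; the lantern relation δ*x*c₃ = c₁*c₁*c₅*c₅; and that c₁ commutes with each of x, c₃, c₄, c₅. Then (c₁*c₂)^2 * ((c₅*c₄)^2)⁻¹ = c₁*c₁*c₂*c₁⁻¹*x*c₃*c₄*c₅*c₅*c₄*c₅*c₄, and consequently ((c₁*c₂)^2 * ((c₅*c₄)^2)⁻¹)^3 = c₁ * (c₁*c₂*x*c₃*c₄*c₅*c₅*c₄*c₅*c₄)^3 * c₁⁻¹. -/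
/-- A braid pair satisfies `(aab)² = (ab)³`. -/
theorem braid_mul_self_mul_sq {G : Type*} [Group G] {a b : G} (h : b * a * b = a * b * a) :
    (a * a * b) ^ 2 = (a * b) ^ 3 :=
  calc (a * a * b) ^ 2 = a * (a * b * a) * (a * b) := by
        simp only [pow_succ, pow_zero, one_mul, mul_assoc]
    _ = a * (b * a * b) * (a * b) := by rw [h]
    _ = (a * b) ^ 3 := by simp only [pow_succ, pow_zero, one_mul, mul_assoc]

theorem genus_two_word {G : Type*} [Group G] (c₁ c₂ c₃ c₄ c₅ x δ : G)
    (hb₁ : c₁ * c₂ * c₁ = c₂ * c₁ * c₂)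
    (hb₂ : c₄ * c₅ * c₄ = c₅ * c₄ * c₅)
    (hchain : (c₅ * c₄) ^ 6 = δ)
    (hlantern : δ * x * c₃ = c₁ * c₁ * c₅ * c₅)
    (hc₁ : ∀ y ∈ [x, c₃, c₄, c₅], c₁ * y = y * c₁) :
    (c₁ * c₂) ^ 2 * ((c₅ * c₄) ^ 2)⁻¹ =
        c₁ * c₁ * c₂ * c₁⁻¹ * x * c₃ * c₄ * c₅ * c₅ * c₄ * c₅ * c₄ ∧
    ((c₁ * c₂) ^ 2 * ((c₅ * c₄) ^ 2)⁻¹) ^ 3 =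
        c₁ * (c₁ * c₂ * x * c₃ * c₄ * c₅ * c₅ * c₄ * c₅ * c₄) ^ 3 * c₁⁻¹ := by
  have hx : Commute c₁ x := hc₁ x (by simp)
  have h3 : Commute c₁ c₃ := hc₁ c₃ (by simp)
  have h4 : Commute c₁ c₄ := hc₁ c₄ (by simp)
  have h5 : Commute c₁ c₅ := hc₁ c₅ (by simp)
  have hδ : Commute c₁ δ := hchain ▸ (h5.mul_right h4).pow_right 6
  have hfull : c₅ * c₅ * (c₄ * c₅ * c₅ * c₄ * c₅ * c₄) * (c₅ * c₄) ^ 2 = δ :=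
    calc _ = (c₅ * c₅ * c₄) ^ 2 * (c₅ * c₄) ^ 3 := by
          simp only [pow_succ, pow_zero, one_mul, mul_assoc]
      _ = δ := by rw [braid_mul_self_mul_sq hb₂, ← pow_add, hchain]
  have htail : x * c₃ * (c₄ * c₅ * c₅ * c₄ * c₅ * c₄) * (c₅ * c₄) ^ 2 = c₁ * c₁ := by
    apply mul_left_cancel (a := δ)
    calc _ = δ * x * c₃ * (c₄ * c₅ * c₅ * c₄ * c₅ * c₄) * (c₅ * c₄) ^ 2 := by
          simp only [mul_assoc]
      _ = c₁ * c₁ * (c₅ * c₅ * (c₄ * c₅ * c₅ * c₄ * c₅ * c₄) * (c₅ * c₄) ^ 2) := by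
          rw [hlantern]; simp only [mul_assoc]
      _ = δ * (c₁ * c₁) := by rw [hfull, (hδ.mul_left hδ).eq]
  have hword : (c₁ * c₂) ^ 2 * ((c₅ * c₄) ^ 2)⁻¹ =
      c₁ * c₁ * c₂ * c₁⁻¹ * x * c₃ * c₄ * c₅ * c₅ * c₄ * c₅ * c₄ := by
    rw [mul_inv_eq_iff_eq_mul]
    calc (c₁ * c₂) ^ 2 = c₁ * (c₂ * c₁ * c₂) := by
          simp only [pow_succ, pow_zero, one_mul, mul_assoc]
      _ = c₁ * c₁ * c₂ * c₁⁻¹ * (c₁ * c₁) := by rw [← hb₁]; group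
      _ = _ := by rw [← htail]; simp only [mul_assoc]
  refine ⟨hword, ?_⟩
  have hcomm : Commute c₁⁻¹ (x * c₃ * c₄ * c₅ * c₅ * c₄ * c₅ * c₄) :=
    ((((((((hx.mul_right h3).mul_right h4).mul_right h5).mul_right h5).mul_right h4).mul_right
      h5).mul_right h4)).inv_left
  rw [hword, ← conj_pow]
  congr 1
  calc _ = c₁ * c₁ * c₂ * (c₁⁻¹ * (x * c₃ * c₄ * c₅ * c₅ * c₄ * c₅ * c₄)) := by
        simp only [mul_assoc]
    _ = _ := by rw [hcomm.eq]; simp only [mul_assoc]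
end

section
/- Let G be a group and let c₁, c₂, c₃, c₄, c₅, x, δ, k₁, h₁ ∈ G. Assume: the braid relation c₄*c₅*c₄ = c₅*c₄*c₅; the lantern relations δ*x*c₃ = c₁*c₁*c₅*c₅ and k₁*h₁*c₁ = c₃*c₃*c₅*c₅; that c₁ commutes with c₄ and with c₅; and that c₃ commutes with each of c₁, c₅, k₁, h₁. Set t₂ = c₃*c₄*c₃⁻¹ and s₂ = c₅⁻¹*c₄*c₅. Then (c₁*c₂*x*c₃*c₄*c₅*c₅*c₄*c₅*c₄)^3 = c₁ * (c₂*x*t₂*k₁*h₁*δ*x*s₂)^3 * c₁⁻¹. -/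
theorem genus_two_alternate {G : Type*} [Group G] (c₁ c₂ c₃ c₄ c₅ x δ k₁ h₁ : G)
    (hb : c₄ * c₅ * c₄ = c₅ * c₄ * c₅)
    (hlantern₁ : δ * x * c₃ = c₁ * c₁ * c₅ * c₅)
    (hlantern₂ : k₁ * h₁ * c₁ = c₃ * c₃ * c₅ * c₅)
    (hc₁ : ∀ y ∈ [c₄, c₅], c₁ * y = y * c₁)
    (hc₃ : ∀ y ∈ [c₁, c₅, k₁, h₁], c₃ * y = y * c₃) :
    (c₁ * c₂ * x * c₃ * c₄ * c₅ * c₅ * c₄ * c₅ * c₄) ^ 3 =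
      c₁ * (c₂ * x * (c₃ * c₄ * c₃⁻¹) * k₁ * h₁ * δ * x * (c₅⁻¹ * c₄ * c₅)) ^ 3 * c₁⁻¹ := by
  have h₁₄ : Commute c₁ c₄ := hc₁ c₄ (by simp)
  have h₁₅ : Commute c₁ c₅ := hc₁ c₅ (by simp)
  have h₃₁ : Commute c₃ c₁ := hc₃ c₁ (by simp)
  have h₃₅ : Commute c₃ c₅ := hc₃ c₅ (by simp)
  have hkh : k₁ * h₁ = c₃ * c₃ * (c₅ * c₅) * c₁⁻¹ := by
    rw [eq_mul_inv_iff_mul_eq, hlantern₂]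
    group
  have hδx : δ * x = c₁ * (c₁ * (c₅ * c₅)) * c₃⁻¹ := by
    rw [eq_mul_inv_iff_mul_eq, hlantern₁]
    group
  have hc₃_comm : Commute c₃ ((c₅ * c₅) * (c₁ * (c₅ * c₅))) :=
    (h₃₅.mul_right h₃₅).mul_right (h₃₁.mul_right (h₃₅.mul_right h₃₅))
  have hc₁_comm : Commute c₁ (c₅ * c₅ * c₅⁻¹ * c₄ * c₅) :=
    ((((h₁₅.mul_right h₁₅).mul_right h₁₅.inv_right).mul_right h₁₄).mul_right h₁₅)
  -- The two lantern substitutions turn the middle of the new word into a power of `c₅`.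
  have hmid : c₃⁻¹ * (k₁ * h₁) * (δ * x) = c₅ * c₅ * (c₁ * (c₅ * c₅)) := by
    calc c₃⁻¹ * (k₁ * h₁) * (δ * x)
        = c₃ * (c₅ * c₅ * (c₁ * (c₅ * c₅))) * c₃⁻¹ := by rw [hkh, hδx]; group
      _ = c₅ * c₅ * (c₁ * (c₅ * c₅)) := by rw [hc₃_comm.eq, mul_inv_cancel_right]
  have hword : c₂ * x * (c₃ * c₄ * c₃⁻¹) * k₁ * h₁ * δ * x * (c₅⁻¹ * c₄ * c₅) =
      c₂ * x * c₃ * c₄ * c₅ * c₅ * c₄ * c₅ * c₄ * c₁ := by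
    calc c₂ * x * (c₃ * c₄ * c₃⁻¹) * k₁ * h₁ * δ * x * (c₅⁻¹ * c₄ * c₅)
        = c₂ * x * c₃ * c₄ * (c₃⁻¹ * (k₁ * h₁) * (δ * x)) * (c₅⁻¹ * c₄ * c₅) := by group
      _ = c₂ * x * c₃ * c₄ * (c₅ * c₅) * (c₁ * (c₅ * c₅ * c₅⁻¹ * c₄ * c₅)) := by
          rw [hmid]; group
      _ = c₂ * x * c₃ * c₄ * (c₅ * c₅) * (c₅ * c₄ * c₅) * c₁ := by
          rw [hc₁_comm.eq]; group
      _ = c₂ * x * c₃ * c₄ * c₅ * c₅ * c₄ * c₅ * c₄ * c₁ := by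
          rw [← hb]; group
  rw [hword, ← conj_pow]
  congr 1
  group
end

section
/- Let G be a group and let c₁, c₂, c₃, c₄, c₅, c₆, c₇, e₁, f₁, x₁, x₂, δ₁, δ₂ ∈ G. Assume: the braid relations c₁*c₂*c₁ = c₂*c₁*c₂, c₄*e₁*c₄ = e₁*c₄*e₁, c₄*f₁*c₄ = f₁*c₄*f₁, and c₆*c₇*c₆ = c₇*c₆*c₇; the chain relation (c₄*e₁*c₄*f₁)^3 = δ₁*δ₂; the lantern relations δ₁*x₁*c₃ = c₁*c₁*e₁*f₁ and δ₂*x₂*c₅ = e₁*f₁*c₇*c₇; that δ₁ and δ₂ commute with each other and with each of c₁, c₂, c₃, c₄, c₅, c₆, c₇, e₁, f₁, x₁, x₂; that e₁ commutes with f₁; that c₁ commutes with each of c₃, c₄, c₅, c₆, c₇, e₁, f₁, x₁, x₂; and that e₁ and f₁ each commute with each of x₂, c₅, c₇. Set r = f₁⁻¹*c₄*f₁. Then (c₁*c₂)^2 * (c₄*e₁*c₄*f₁)⁻¹ * (c₇*c₆)^2 = c₁*c₁*c₂*c₁⁻¹*x₁*c₃*r*e₁*e₁*c₄*x₂*c₅*c₆*c₇,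 and consequently ((c₁*c₂)^2 * (c₄*e₁*c₄*f₁)⁻¹ * (c₇*c₆)^2)^3 = c₁ * (c₁*c₂*x₁*c₃*r*e₁*e₁*c₄*x₂*c₅*c₆*c₇)^3 * c₁⁻¹. -/
theorem genus_three_word {G : Type*} [Group G]
    (c₁ c₂ c₃ c₄ c₅ c₆ c₇ e₁ f₁ x₁ x₂ δ₁ δ₂ : G)
    (hb₁ : c₁ * c₂ * c₁ = c₂ * c₁ * c₂)
    (hb₂ : c₄ * e₁ * c₄ = e₁ * c₄ * e₁)
    (hb₃ : c₄ * f₁ * c₄ = f₁ * c₄ * f₁)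
    (hb₄ : c₆ * c₇ * c₆ = c₇ * c₆ * c₇)
    (hchain : (c₄ * e₁ * c₄ * f₁) ^ 3 = δ₁ * δ₂)
    (hlantern₁ : δ₁ * x₁ * c₃ = c₁ * c₁ * e₁ * f₁)
    (hlantern₂ : δ₂ * x₂ * c₅ = e₁ * f₁ * c₇ * c₇)
    (hδ : ∀ a ∈ [δ₁, δ₂], ∀ b ∈ [δ₁, δ₂, c₁, c₂, c₃, c₄, c₅, c₆, c₇, e₁, f₁, x₁, x₂],
      a * b = b * a)
    (hef : e₁ * f₁ = f₁ * e₁)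
    (hc₁ : ∀ b ∈ [c₃, c₄, c₅, c₆, c₇, e₁, f₁, x₁, x₂], c₁ * b = b * c₁)
    (hef' : ∀ a ∈ [e₁, f₁], ∀ b ∈ [x₂, c₅, c₇], a * b = b * a) :
    (c₁ * c₂) ^ 2 * (c₄ * e₁ * c₄ * f₁)⁻¹ * (c₇ * c₆) ^ 2 =
        c₁ * c₁ * c₂ * c₁⁻¹ * x₁ * c₃ * (f₁⁻¹ * c₄ * f₁) * e₁ * e₁ * c₄ * x₂ * c₅ * c₆ * c₇ ∧
    ((c₁ * c₂) ^ 2 * (c₄ * e₁ * c₄ * f₁)⁻¹ * (c₇ * c₆) ^ 2) ^ 3 =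
        c₁ * (c₁ * c₂ * x₁ * c₃ * (f₁⁻¹ * c₄ * f₁) * e₁ * e₁ * c₄ * x₂ * c₅ * c₆ * c₇) ^ 3 *
          c₁⁻¹ := by
  simp only [List.mem_cons, List.not_mem_nil, or_false, forall_eq_or_imp, forall_eq] at hδ hc₁
  obtain ⟨⟨-, hδ₁₂, hδ₁c₁, -⟩, -, -, -, -, -, hδ₂c₄, -, -, -, hδ₂e, hδ₂f, -⟩ := hδ
  obtain ⟨hc₃, hc₄, hc₅, hc₆, hc₇, hce, hcf, hcx₁, hcx₂⟩ := hc₁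
  -- The square of the chain word, in the form in which both lantern relations apply.
  have hsq : (c₄ * e₁ * c₄ * f₁) ^ 2 =
      e₁ * f₁ * (f₁⁻¹ * c₄ * f₁ * e₁ * e₁ * c₄) * (e₁ * f₁) := by
    calc (c₄ * e₁ * c₄ * f₁) ^ 2
        = c₄ * e₁ * c₄ * f₁ * (c₄ * e₁ * c₄) * f₁ := by
          simp only [sq, mul_assoc]
      _ = e₁ * c₄ * (e₁ * f₁) * e₁ * c₄ * e₁ * f₁ := by rw [hb₂]; group
      _ = e₁ * c₄ * (f₁ * e₁) * e₁ * c₄ * e₁ * f₁ := by rw [hef]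
      _ = _ := by group
  have hinv : (c₄ * e₁ * c₄ * f₁)⁻¹ = δ₁⁻¹ * δ₂⁻¹ * (c₄ * e₁ * c₄ * f₁) ^ 2 := by
    rw [← mul_inv_rev, ← hδ₁₂, ← hchain]
    group
  have hx₁ : x₁ * c₃ = c₁ * c₁ * δ₁⁻¹ * (e₁ * f₁) := by
    have h : Commute δ₁ (c₁ * c₁) := Commute.mul_right hδ₁c₁ hδ₁c₁
    rw [← h.inv_left.eq, mul_assoc, eq_inv_mul_iff_mul_eq]
    simpa only [mul_assoc] using hlantern₁
  have hx₂ : x₂ * c₅ = δ₂⁻¹ * (e₁ * f₁ * c₇ * c₇) := by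
    rw [← hlantern₂]
    group
  have hδ₂ : Commute δ₂ (e₁ * f₁ * (f₁⁻¹ * c₄ * f₁ * e₁ * e₁ * c₄)) := by
    have he : Commute δ₂ e₁ := hδ₂e
    have hf : Commute δ₂ f₁ := hδ₂f
    have h₄ : Commute δ₂ c₄ := hδ₂c₄
    exact (he.mul_right hf).mul_right
      (((((hf.inv_right.mul_right h₄).mul_right hf).mul_right he).mul_right he).mul_right h₄)
  have hword : (c₁ * c₂) ^ 2 * (c₄ * e₁ * c₄ * f₁)⁻¹ * (c₇ * c₆) ^ 2 =
      c₁ * c₁ * c₂ * c₁⁻¹ * x₁ * c₃ * (f₁⁻¹ * c₄ * f₁) * e₁ * e₁ * c₄ * x₂ * c₅ * c₆ * c₇ := by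
    have h₁₂ : (c₁ * c₂) ^ 2 = c₁ * (c₁ * c₂ * c₁) := by
      rw [hb₁]
      simp only [sq, mul_assoc]
    have h₆₇ : (c₇ * c₆) ^ 2 = c₇ * (c₇ * c₆ * c₇) := by
      rw [← hb₄]
      simp only [sq, mul_assoc]
    calc (c₁ * c₂) ^ 2 * (c₄ * e₁ * c₄ * f₁)⁻¹ * (c₇ * c₆) ^ 2
        = c₁ * (c₁ * c₂ * c₁) * δ₁⁻¹ *
            (δ₂⁻¹ * (e₁ * f₁ * (f₁⁻¹ * c₄ * f₁ * e₁ * e₁ * c₄))) * (e₁ * f₁) *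
            (c₇ * (c₇ * c₆ * c₇)) := by
          rw [h₁₂, h₆₇, hinv, hsq]
          simp only [mul_assoc]
      _ = c₁ * c₁ * c₂ * c₁⁻¹ * (c₁ * c₁ * δ₁⁻¹ * (e₁ * f₁)) *
            (f₁⁻¹ * c₄ * f₁ * e₁ * e₁ * c₄) * (δ₂⁻¹ * (e₁ * f₁ * c₇ * c₇)) * c₆ * c₇ := by
          rw [hδ₂.inv_left.eq]
          group
      _ = _ := by
          rw [← hx₁, ← hx₂]
          simp only [mul_assoc]
  refine ⟨hword, ?_⟩
  have hc : Commute c₁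
      (x₁ * c₃ * (f₁⁻¹ * c₄ * f₁) * e₁ * e₁ * c₄ * x₂ * c₅ * c₆ * c₇) := by
    have hf : Commute c₁ f₁ := hcf
    have hr : Commute c₁ (f₁⁻¹ * c₄ * f₁) := (hf.inv_right.mul_right hc₄).mul_right hf
    exact ((((((((Commute.mul_right hcx₁ hc₃).mul_right hr).mul_right hce).mul_right
      hce).mul_right hc₄).mul_right hcx₂).mul_right hc₅).mul_right hc₆).mul_right hc₇
  rw [hword, ← conj_pow]
  congr 1
  calc _ = c₁ * c₁ * c₂ * (c₁⁻¹ *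
        (x₁ * c₃ * (f₁⁻¹ * c₄ * f₁) * e₁ * e₁ * c₄ * x₂ * c₅ * c₆ * c₇)) := by
        simp only [mul_assoc]
    _ = _ := by
        rw [hc.inv_left.eq]
        simp only [mul_assoc]
end

section
/- Let G be a group and let c₁, c₂, c₃, c₄, c₅, c₆, c₇, e₁, f₁, x₁, x₂, x̄₂, δ₁, δ₂, t, v ∈ G. Assume all the hypotheses of the genus-3 computation, namely: the braid relations c₁*c₂*c₁ = c₂*c₁*c₂, c₄*e₁*c₄ = e₁*c₄*e₁, c₄*f₁*c₄ = f₁*c₄*f₁, c₆*c₇*c₆ = c₇*c₆*c₇; the chain relation (c₄*e₁*c₄*f₁)^3 = δ₁*δ₂; the lantern relations δ₁*x₁*c₃ = c₁*c₁*e₁*f₁ and δ₂*x₂*c₅ = e₁*f₁*c₇*c₇; that δ₁, δ₂ commute with each other and with all the other listed elements; e₁ commutes with f₁; c₁ commutes with each of c₃, c₄, c₅, c₆, c₇, e₁, f₁, x₁, x₂; e₁ and f₁ each commute with x₂, c₅, c₇. Assume in addition: the lantern relation f₁*t*v = c₁*c₃*c₅*c₇; the identity c₅*x̄₂ = x₂*c₅;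 that c₁, c₃, c₅, c₇ pairwise commute; that c₃ commutes with t and v; that c₁ commutes with t and v; and that c₇ commutes with each of c₄, e₁, f₁, x₂. Set ȳ₁ = c₁*c₁*c₂*c₁⁻¹*c₁⁻¹, s₂ = c₅⁻¹*c₄*c₅, and r₃ = c₇⁻¹*c₆*c₇. Then (c₁*c₂)^2 * (c₄*e₁*c₄*f₁)⁻¹ * (c₇*c₆)^2 = ȳ₁*x₁*t*v*s₂*e₁*f₁*e₁*s₂*x̄₂*r₃. -/
/-- If `a` and `b` satisfy the braid relation, `(a * b) ^ 2` is a conjugate of `b` times `a ^ 3`. -/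
theorem sq_mul_eq_conj_mul_cube {G : Type*} [Group G] {a b : G} (h : a * b * a = b * a * b) :
    (a * b) ^ 2 = a * a * b * a⁻¹ * a⁻¹ * a ^ 3 :=
  calc (a * b) ^ 2 = a * (b * a * b) := by simp [pow_succ, mul_assoc]
    _ = a * (a * b * a) := by rw [h]
    _ = a * a * b * a⁻¹ * a⁻¹ * a ^ 3 := by simp [pow_succ, mul_assoc]

/-- If `b` and `a` satisfy the braid relation, `(a * b) ^ 2` is `a ^ 3` times a conjugate of `b`. -/
theorem sq_mul_eq_cube_mul_conj {G : Type*} [Group G] {a b : G} (h : b * a * b = a * b * a) :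
    (a * b) ^ 2 = a ^ 3 * (a⁻¹ * b * a) :=
  calc (a * b) ^ 2 = a * (b * a * b) := by simp [pow_succ, mul_assoc]
    _ = a * (a * b * a) := by rw [h]
    _ = a ^ 3 * (a⁻¹ * b * a) := by simp [pow_succ, mul_assoc]

theorem genus_three_alternate {G : Type*} [Group G]
    (c₁ c₂ c₃ c₄ c₅ c₆ c₇ e₁ f₁ x₁ x₂ xb₂ δ₁ δ₂ t v : G)
    (hb₁ : c₁ * c₂ * c₁ = c₂ * c₁ * c₂)
    (hb₂ : c₄ * e₁ * c₄ = e₁ * c₄ * e₁)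
    (hb₃ : c₄ * f₁ * c₄ = f₁ * c₄ * f₁)
    (hb₄ : c₆ * c₇ * c₆ = c₇ * c₆ * c₇)
    (hchain : (c₄ * e₁ * c₄ * f₁) ^ 3 = δ₁ * δ₂)
    (hlantern₁ : δ₁ * x₁ * c₃ = c₁ * c₁ * e₁ * f₁)
    (hlantern₂ : δ₂ * x₂ * c₅ = e₁ * f₁ * c₇ * c₇)
    (hδ : ∀ a ∈ [δ₁, δ₂],
      ∀ b ∈ [δ₁, δ₂, c₁, c₂, c₃, c₄, c₅, c₆, c₇, e₁, f₁, x₁, x₂, xb₂, t, v],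
      a * b = b * a)
    (hef : e₁ * f₁ = f₁ * e₁)
    (hc₁ : ∀ b ∈ [c₃, c₄, c₅, c₆, c₇, e₁, f₁, x₁, x₂], c₁ * b = b * c₁)
    (hef' : ∀ a ∈ [e₁, f₁], ∀ b ∈ [x₂, c₅, c₇], a * b = b * a)
    (hlantern₃ : f₁ * t * v = c₁ * c₃ * c₅ * c₇)
    (hx₂ : c₅ * xb₂ = x₂ * c₅)
    (hpair : List.Pairwise (fun a b => a * b = b * a) [c₁, c₃, c₅, c₇])
    (hc₃ : ∀ b ∈ [t, v], c₃ * b = b * c₃)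
    (hc₁' : ∀ b ∈ [t, v], c₁ * b = b * c₁)
    (hc₇ : ∀ b ∈ [c₄, e₁, f₁, x₂], c₇ * b = b * c₇) :
    (c₁ * c₂) ^ 2 * (c₄ * e₁ * c₄ * f₁)⁻¹ * (c₇ * c₆) ^ 2 =
      (c₁ * c₁ * c₂ * c₁⁻¹ * c₁⁻¹) * x₁ * t * v * (c₅⁻¹ * c₄ * c₅) * e₁ * f₁ * e₁ *
        (c₅⁻¹ * c₄ * c₅) * xb₂ * (c₇⁻¹ * c₆ * c₇) := by
  simp only [List.mem_cons, List.not_mem_nil, or_false, forall_eq_or_imp, forall_eq,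
    List.pairwise_cons, List.Pairwise.nil, and_true, ← commute_iff_eq] at hδ hc₁ hef' hpair hc₃ hc₇
  obtain ⟨⟨-, d1_d2, d1_c1, -⟩, -, -, d2_c1, -, -, d2_c4, d2_c5, -, d2_c7, d2_e, d2_f, -⟩ := hδ
  obtain ⟨-, -, -, -, -, c1_e, -⟩ := hc₁
  obtain ⟨⟨-, e_c5, -⟩, -, f_c5, -⟩ := hef'
  obtain ⟨-, ⟨c3_c5, c3_c7⟩, c5_c7, -⟩ := hpair
  obtain ⟨c7_c4, c7_e, c7_f, -⟩ := hc₇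
  have c3_tv : Commute c₃ (t * v) := hc₃.1.mul_right hc₃.2
  have tv_eq : t * v = f₁⁻¹ * (c₁ * c₅ * c₇) * c₃ := by
    have h : c₁ * c₃ * c₅ * c₇ = c₁ * c₅ * c₇ * c₃ := by
      rw [mul_assoc c₁, c3_c5.eq, mul_assoc, mul_assoc, c3_c7.eq]
      simp only [mul_assoc]
    rw [mul_assoc _ _ c₃, ← h, ← hlantern₃]
    simp [mul_assoc]
  have x1_eq : x₁ = δ₁⁻¹ * (c₁ * c₁ * e₁ * f₁) * c₃⁻¹ := by
    rw [← hlantern₁]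
    simp [mul_assoc]
  have x1_tv : x₁ * (t * v) = δ₁⁻¹ * c₁ ^ 3 * (e₁ * c₅ * c₇) :=
    calc x₁ * (t * v) = δ₁⁻¹ * (c₁ * c₁ * e₁ * f₁) * (c₃⁻¹ * (t * v)) := by
          rw [x1_eq]; simp [mul_assoc]
      _ = δ₁⁻¹ * (c₁ * c₁ * e₁ * f₁) * (f₁⁻¹ * (c₁ * c₅ * c₇)) := by
          rw [c3_tv.inv_left.eq, tv_eq]; simp [mul_assoc]
      _ = δ₁⁻¹ * (c₁ * c₁) * (e₁ * c₁) * (c₅ * c₇) := by simp [mul_assoc]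
      _ = δ₁⁻¹ * c₁ ^ 3 * (e₁ * c₅ * c₇) := by
          rw [← c1_e.eq]; simp [pow_succ, mul_assoc]
  have xb2_eq : xb₂ = c₅⁻¹ * (δ₂⁻¹ * (e₁ * f₁ * c₇ * c₇)) := by
    rw [← hlantern₂, eq_inv_mul_iff_mul_eq, hx₂]
    simp [mul_assoc]
  have efe_c5 : Commute (e₁ * f₁ * e₁) c₅ := (e_c5.mul_left f_c5).mul_left e_c5
  have middle : e₁ * c₄ * (e₁ * f₁ * e₁) * c₄ * (e₁ * f₁) = (c₄ * e₁ * c₄ * f₁) ^ 2 :=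
    calc e₁ * c₄ * (e₁ * f₁ * e₁) * c₄ * (e₁ * f₁)
        = (e₁ * c₄ * e₁) * f₁ * ((e₁ * c₄ * e₁) * f₁) := by simp [mul_assoc]
      _ = (c₄ * e₁ * c₄ * f₁) ^ 2 := by rw [← hb₂]; simp [pow_succ, mul_assoc]
  have c7_B : Commute c₇ (c₄ * (e₁ * f₁ * e₁) * c₄) :=
    (c7_c4.mul_right ((c7_e.mul_right c7_f).mul_right c7_e)).mul_right c7_c4
  have c7_ef : Commute c₇ (e₁ * f₁) := c7_e.mul_right c7_f
  have d2_word : Commute δ₂ (c₁ ^ 3 * (e₁ * c₅ * c₇) * (c₅⁻¹ * c₄ * c₅) * (e₁ * f₁ * e₁) *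
      (c₅⁻¹ * c₄ * c₅) * c₅⁻¹) := by
    have d2_s : Commute δ₂ (c₅⁻¹ * c₄ * c₅) := (d2_c5.inv_right.mul_right d2_c4).mul_right d2_c5
    exact (((((d2_c1.pow_right 3).mul_right ((d2_e.mul_right d2_c5).mul_right d2_c7)).mul_right
      d2_s).mul_right ((d2_e.mul_right d2_f).mul_right d2_e)).mul_right d2_s).mul_right
      d2_c5.inv_right
  have word : (e₁ * c₅ * c₇) * (c₅⁻¹ * c₄ * c₅) * (e₁ * f₁ * e₁) * (c₅⁻¹ * c₄ * c₅) * c₅⁻¹ *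
      (e₁ * f₁ * c₇ * c₇) = (c₄ * e₁ * c₄ * f₁) ^ 2 * c₇ ^ 3 :=
    calc _ = e₁ * (c₅ * c₇) * c₅⁻¹ * c₄ * (c₅ * (e₁ * f₁ * e₁)) * c₅⁻¹ * c₄ *
          (e₁ * f₁) * c₇ ^ 2 := by simp [pow_succ, mul_assoc]
      _ = e₁ * (c₇ * (c₄ * (e₁ * f₁ * e₁) * c₄)) * (e₁ * f₁) * c₇ ^ 2 := by
          rw [c5_c7.eq, ← efe_c5.eq]; simp [pow_succ, mul_assoc]
      _ = e₁ * (c₄ * (e₁ * f₁ * e₁) * c₄) * (c₇ * (e₁ * f₁)) * c₇ ^ 2 := by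
          rw [c7_B.eq]; simp [pow_succ, mul_assoc]
      _ = e₁ * c₄ * (e₁ * f₁ * e₁) * c₄ * (e₁ * f₁) * c₇ ^ 3 := by
          rw [c7_ef.eq]; simp [pow_succ, mul_assoc]
      _ = _ := by rw [middle]
  have A_inv : (c₄ * e₁ * c₄ * f₁)⁻¹ = (δ₁ * δ₂)⁻¹ * (c₄ * e₁ * c₄ * f₁) ^ 2 := by
    rw [← hchain, eq_inv_mul_iff_mul_eq, pow_succ, mul_inv_cancel_right]
  have core : c₁ ^ 3 * (c₄ * e₁ * c₄ * f₁)⁻¹ * c₇ ^ 3 =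
      x₁ * (t * v) * (c₅⁻¹ * c₄ * c₅) * (e₁ * f₁ * e₁) * (c₅⁻¹ * c₄ * c₅) * xb₂ := by
    symm
    calc x₁ * (t * v) * (c₅⁻¹ * c₄ * c₅) * (e₁ * f₁ * e₁) * (c₅⁻¹ * c₄ * c₅) * xb₂
        = δ₁⁻¹ * ((c₁ ^ 3 * (e₁ * c₅ * c₇) * (c₅⁻¹ * c₄ * c₅) * (e₁ * f₁ * e₁) *
          (c₅⁻¹ * c₄ * c₅) * c₅⁻¹) * δ₂⁻¹) * (e₁ * f₁ * c₇ * c₇) := by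
          rw [x1_tv, xb2_eq]; simp only [mul_assoc]
      _ = δ₁⁻¹ * δ₂⁻¹ * c₁ ^ 3 * ((e₁ * c₅ * c₇) * (c₅⁻¹ * c₄ * c₅) * (e₁ * f₁ * e₁) *
          (c₅⁻¹ * c₄ * c₅) * c₅⁻¹ * (e₁ * f₁ * c₇ * c₇)) := by
          rw [← d2_word.inv_left.eq]; simp only [mul_assoc]
      _ = (δ₁ * δ₂)⁻¹ * c₁ ^ 3 * ((c₄ * e₁ * c₄ * f₁) ^ 2 * c₇ ^ 3) := by
          rw [word, d1_d2.eq, mul_inv_rev]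
      _ = c₁ ^ 3 * (c₄ * e₁ * c₄ * f₁)⁻¹ * c₇ ^ 3 := by
          rw [A_inv, ((d1_c1.mul_left d2_c1).inv_left.pow_right 3).eq]
          simp only [mul_assoc]
  rw [sq_mul_eq_conj_mul_cube hb₁, sq_mul_eq_cube_mul_conj hb₄]
  calc _ = c₁ * c₁ * c₂ * c₁⁻¹ * c₁⁻¹ * (c₁ ^ 3 * (c₄ * e₁ * c₄ * f₁)⁻¹ * c₇ ^ 3) *
        (c₇⁻¹ * c₆ * c₇) := by simp only [mul_assoc]
    _ = _ := by rw [core]; simp only [mul_assoc]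
end

section
/- Let G be a group and let c₁, c₂, c₃, c₄, c₅, c₆, c₇, e₁, f₁, x₁, x₂, x̄₂, δ₁, δ₂, t, v ∈ G. Assume all the hypotheses of the alternate genus-3 computation: the braid relations c₁*c₂*c₁ = c₂*c₁*c₂, c₄*e₁*c₄ = e₁*c₄*e₁, c₄*f₁*c₄ = f₁*c₄*f₁, c₆*c₇*c₆ = c₇*c₆*c₇; the chain relation (c₄*e₁*c₄*f₁)^3 = δ₁*δ₂; the lantern relations δ₁*x₁*c₃ = c₁*c₁*e₁*f₁, δ₂*x₂*c₅ = e₁*f₁*c₇*c₇, and f₁*t*v = c₁*c₃*c₅*c₇; the identity c₅*x̄₂ = x₂*c₅; that δ₁, δ₂ commute with each other and with all other listed elements; e₁ commutes with f₁; c₁ commutes with each of c₃, c₄, c₅, c₆, c₇, e₁, f₁, x₁, x₂, t, v; e₁ and f₁ each commute with x₂, c₅, c₇; c₁, c₃, c₅, c₇ pairwise commute; c₃ commutes with t and v; c₇ commutes with c₄, e₁, f₁, x₂. Assume moreover the chain relation e₁*f₁ = (c₁*c₂*c₃)^4. Set ȳ₁ = c₁*c₁*c₂*c₁⁻¹*c₁⁻¹,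 s₂ = c₅⁻¹*c₄*c₅, r₃ = c₇⁻¹*c₆*c₇. Then (c₁*c₂)^2 * (c₄*e₁*c₄*f₁)⁻¹ * (c₇*c₆)^2 = ȳ₁*x₁*t*v*s₂*(c₁*c₂*c₃)^4*e₁*s₂*x̄₂*r₃. -/
theorem genus_three_second_alternate {G : Type*} [Group G]
    (c₁ c₂ c₃ c₄ c₅ c₆ c₇ e₁ f₁ x₁ x₂ xb₂ δ₁ δ₂ t v : G)
    (hb₁ : c₁ * c₂ * c₁ = c₂ * c₁ * c₂)
    (hb₂ : c₄ * e₁ * c₄ = e₁ * c₄ * e₁)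
    (hb₃ : c₄ * f₁ * c₄ = f₁ * c₄ * f₁)
    (hb₄ : c₆ * c₇ * c₆ = c₇ * c₆ * c₇)
    (hchain : (c₄ * e₁ * c₄ * f₁) ^ 3 = δ₁ * δ₂)
    (hlantern₁ : δ₁ * x₁ * c₃ = c₁ * c₁ * e₁ * f₁)
    (hlantern₂ : δ₂ * x₂ * c₅ = e₁ * f₁ * c₇ * c₇)
    (hlantern₃ : f₁ * t * v = c₁ * c₃ * c₅ * c₇)
    (hx₂ : c₅ * xb₂ = x₂ * c₅)
    (hδ : ∀ a ∈ [δ₁, δ₂],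
      ∀ b ∈ [δ₁, δ₂, c₁, c₂, c₃, c₄, c₅, c₆, c₇, e₁, f₁, x₁, x₂, xb₂, t, v],
      a * b = b * a)
    (hef : e₁ * f₁ = f₁ * e₁)
    (hc₁ : ∀ b ∈ [c₃, c₄, c₅, c₆, c₇, e₁, f₁, x₁, x₂, t, v], c₁ * b = b * c₁)
    (hef' : ∀ a ∈ [e₁, f₁], ∀ b ∈ [x₂, c₅, c₇], a * b = b * a)
    (hpair : List.Pairwise (fun a b => a * b = b * a) [c₁, c₃, c₅, c₇])
    (hc₃ : ∀ b ∈ [t, v], c₃ * b = b * c₃)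
    (hc₇ : ∀ b ∈ [c₄, e₁, f₁, x₂], c₇ * b = b * c₇)
    (hchain₂ : e₁ * f₁ = (c₁ * c₂ * c₃) ^ 4) :
    (c₁ * c₂) ^ 2 * (c₄ * e₁ * c₄ * f₁)⁻¹ * (c₇ * c₆) ^ 2 =
      (c₁ * c₁ * c₂ * c₁⁻¹ * c₁⁻¹) * x₁ * t * v * (c₅⁻¹ * c₄ * c₅) * (c₁ * c₂ * c₃) ^ 4 *
        e₁ * (c₅⁻¹ * c₄ * c₅) * xb₂ * (c₇⁻¹ * c₆ * c₇) := by
  simp only [List.mem_cons, List.not_mem_nil, or_false, forall_eq_or_imp,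
    forall_eq] at hδ hc₁ hef' hc₃ hc₇
  simp only [List.pairwise_cons, List.mem_cons, List.not_mem_nil, or_false, forall_eq_or_imp,
    forall_eq] at hpair
  obtain ⟨⟨-, δ₁δ₂, δ₁c₁, -⟩,
    -, -, δ₂c₁, -, -, δ₂c₄, -, -, δ₂c₇, δ₂e₁, δ₂f₁, -⟩ := hδ
  obtain ⟨⟨-, e₁c₅, -⟩, -, f₁c₅, -⟩ := hef'
  obtain ⟨-, ⟨c₃c₅, c₃c₇⟩, c₅c₇, -⟩ := hpair
  obtain ⟨c₇c₄, c₇e₁, c₇f₁, -⟩ := hc₇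
  have c₁e₁ : c₁ * e₁ = e₁ * c₁ := hc₁.2.2.2.2.2.1
  have left_factor : (c₁ * c₂) ^ 2 = c₁ * c₁ * c₂ * c₁⁻¹ * c₁⁻¹ * c₁ ^ 3 := by
    calc (c₁ * c₂) ^ 2 = c₁ * (c₂ * c₁ * c₂) := by simp only [sq, mul_assoc]
      _ = c₁ * (c₁ * c₂ * c₁) := by rw [hb₁]
      _ = _ := by group
  have right_factor : (c₇ * c₆) ^ 2 = c₇ ^ 3 * (c₇⁻¹ * c₆ * c₇) := by
    calc (c₇ * c₆) ^ 2 = c₇ * (c₆ * c₇ * c₆) := by simp only [sq, mul_assoc]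
      _ = c₇ * (c₇ * c₆ * c₇) := by rw [hb₄]
      _ = _ := by simp [pow_three, mul_assoc]
  have square : (c₄ * e₁ * c₄ * f₁) ^ 2 = e₁ * c₄ * (e₁ * f₁) * e₁ * c₄ * (e₁ * f₁) := by
    calc (c₄ * e₁ * c₄ * f₁) ^ 2 = (c₄ * e₁ * c₄) * f₁ * (c₄ * e₁ * c₄) * f₁ := by
          simp only [sq, mul_assoc]
      _ = e₁ * c₄ * (e₁ * f₁) * e₁ * c₄ * (e₁ * f₁) := by rw [hb₂]; group
  have inverse : (c₄ * e₁ * c₄ * f₁)⁻¹ = (δ₁ * δ₂)⁻¹ * (c₄ * e₁ * c₄ * f₁) ^ 2 := by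
    rw [← hchain]; group
  have lantern_product : δ₁ * (x₁ * t * v) = c₁ ^ 3 * e₁ * c₅ * c₇ := by
    have c₃_comm : Commute c₃ (t * v) := Commute.mul_right hc₃.1 hc₃.2
    have c₃_comm' : Commute c₃ (c₅ * c₇) := Commute.mul_right c₃c₅ c₃c₇
    apply mul_right_cancel (b := c₃)
    calc δ₁ * (x₁ * t * v) * c₃ = δ₁ * x₁ * ((t * v) * c₃) := by group
      _ = (δ₁ * x₁ * c₃) * (t * v) := by rw [← c₃_comm.eq]; group
      _ = c₁ * c₁ * e₁ * (f₁ * t * v) := by rw [hlantern₁]; group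
      _ = c₁ * c₁ * (e₁ * c₁) * (c₃ * (c₅ * c₇)) := by rw [hlantern₃]; group
      _ = c₁ ^ 3 * e₁ * c₅ * c₇ * c₃ := by
        rw [← c₁e₁, c₃_comm'.eq]
        simp only [pow_three, mul_assoc]
  have lantern_conj : δ₂ * (c₅ * xb₂) = e₁ * f₁ * c₇ ^ 2 := by
    rw [hx₂, ← mul_assoc, hlantern₂]; simp only [sq, mul_assoc]
  have conj : (c₅⁻¹ * c₄ * c₅) * (e₁ * f₁) * e₁ * (c₅⁻¹ * c₄ * c₅) =
      c₅⁻¹ * (c₄ * (e₁ * f₁) * e₁ * c₄) * c₅ := by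
    have h : Commute c₅ (e₁ * f₁ * e₁) :=
      (Commute.mul_right e₁c₅.symm f₁c₅.symm).mul_right e₁c₅.symm
    calc _ = c₅⁻¹ * c₄ * (c₅ * (e₁ * f₁ * e₁)) * c₅⁻¹ * c₄ * c₅ := by group
      _ = _ := by rw [h.eq]; group
  have c₇_comm : Commute c₇ (c₄ * (e₁ * f₁) * e₁ * c₄ * (e₁ * f₁)) := by
    have ef : Commute c₇ (e₁ * f₁) := Commute.mul_right c₇e₁ c₇f₁
    exact (((Commute.mul_right c₇c₄ ef).mul_right c₇e₁).mul_right c₇c₄).mul_right ef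
  have δ₁_comm : Commute δ₁ (c₁ ^ 3) := Commute.pow_right δ₁c₁ 3
  have δ₂_comm : Commute δ₂ (c₁ ^ 3) := Commute.pow_right δ₂c₁ 3
  have δ₂_comm' : Commute δ₂ (c₁ ^ 3 * e₁ * c₇ * (c₄ * (e₁ * f₁) * e₁ * c₄)) :=
    ((δ₂_comm.mul_right δ₂e₁).mul_right δ₂c₇).mul_right
      (((Commute.mul_right δ₂c₄ (Commute.mul_right δ₂e₁ δ₂f₁)).mul_right δ₂e₁).mul_right δ₂c₄)
  have δ_comm : Commute (δ₁ * δ₂) (c₁ ^ 3) := δ₁_comm.mul_left δ₂_comm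
  have core : c₁ ^ 3 * (c₄ * e₁ * c₄ * f₁)⁻¹ * c₇ ^ 3 =
      x₁ * t * v * ((c₅⁻¹ * c₄ * c₅) * (e₁ * f₁) * e₁ * (c₅⁻¹ * c₄ * c₅)) * xb₂ := by
    apply mul_left_cancel (a := δ₁ * δ₂)
    rw [inverse, conj, square]
    set w := c₄ * (e₁ * f₁) * e₁ * c₄ with hw
    have c₇c₅ : c₇ * c₅⁻¹ = c₅⁻¹ * c₇ := (Commute.inv_left c₅c₇).eq.symm
    trans c₁ ^ 3 * e₁ * (w * (e₁ * f₁)) * c₇ ^ 3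
    · calc _ = ((δ₁ * δ₂) * c₁ ^ 3) * (δ₁ * δ₂)⁻¹ *
            (e₁ * c₄ * (e₁ * f₁) * e₁ * c₄ * (e₁ * f₁)) * c₇ ^ 3 := by group
        _ = _ := by rw [δ_comm.eq, hw]; group
    · symm
      calc _ = (δ₁ * δ₂) * (x₁ * t * v) * c₅⁻¹ * w * (c₅ * xb₂) := by group
        _ = δ₂ * (δ₁ * (x₁ * t * v)) * c₅⁻¹ * w * (c₅ * xb₂) := by rw [δ₁δ₂]; group
        _ = δ₂ * (c₁ ^ 3 * e₁ * c₅ * (c₇ * c₅⁻¹) * w) * (c₅ * xb₂) := by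
          rw [lantern_product]; group
        _ = (δ₂ * (c₁ ^ 3 * e₁ * c₇ * w)) * (c₅ * xb₂) := by rw [c₇c₅]; group
        _ = c₁ ^ 3 * e₁ * c₇ * w * (δ₂ * (c₅ * xb₂)) := by rw [δ₂_comm'.eq]; group
        _ = c₁ ^ 3 * e₁ * (c₇ * (w * (e₁ * f₁))) * c₇ ^ 2 := by rw [lantern_conj]; group
        _ = _ := by rw [c₇_comm.eq]; group
  rw [← hchain₂, left_factor, right_factor]
  calc _ = c₁ * c₁ * c₂ * c₁⁻¹ * c₁⁻¹ * (c₁ ^ 3 * (c₄ * e₁ * c₄ * f₁)⁻¹ * c₇ ^ 3) *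
        (c₇⁻¹ * c₆ * c₇) := by simp only [mul_assoc]
    _ = _ := by rw [core]; simp only [mul_assoc]
end

section
/- Let G be a group and let c₁, …, c₉, e₁, f₁, e₂, f₂, x₁, x₂, x₃, x̄₃, δ₁, δ₂, δ₃, t, v ∈ G. Assume: the braid relations c₁*c₂*c₁ = c₂*c₁*c₂, c₄*e₁*c₄ = e₁*c₄*e₁, c₄*f₁*c₄ = f₁*c₄*f₁, c₆*e₂*c₆ = e₂*c₆*e₂, c₈*c₉*c₈ = c₉*c₈*c₉; the chain relations (c₄*e₁*c₄*f₁)^3 = δ₁*δ₂ and (c₉*c₈)^6 = δ₃; the lantern relations δ₁*x₁*c₃ = c₁*c₁*e₁*f₁, δ₂*x₂*c₅ = e₁*f₁*e₂*f₂, δ₃*x₃*c₇ = e₂*f₂*c₉*c₉, and f₂*t*v = f₁*c₅*c₇*c₉; the identity c₇*x̄₃ = x₃*c₇; that δ₁, δ₂, δ₃ commute with each other and with every other listed element; and the commutations: e₁ commutes with f₁; e₂ commutes with f₂; each of e₁, f₁ commutes with each of e₂, f₂, x₂, c₅; each of e₂, f₂ commutes with each of x₃, c₇, c₉; f₁, c₅,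 c₇, c₉ pairwise commute; f₁ commutes with each of x₂, t, v; t and v each commute with c₅; c₉ commutes with each of c₆, x₃, x̄₃; and c₁ commutes with each of c₃, c₄, c₅, c₆, c₇, c₈, c₉, e₁, f₁, x₁, x₂, t, v, x̄₃. Set y₂ = f₁⁻¹*c₄*e₁*c₄⁻¹*f₁ and s₃ = c₇⁻¹*c₆*c₇. Then (c₁*c₂)^2 * (c₄*e₁*c₄*f₁)⁻¹ * (c₆*e₂*c₆*f₂) * ((c₉*c₈)^2)⁻¹ = c₁*c₁*c₂*c₁⁻¹*x₁*c₃*y₂*y₂*c₄*x₂*t*v*s₃*x̄₃*c₈*c₉*c₉*c₈*c₈, and consequently the cube of the left-hand side equals c₁ * (c₁*c₂*x₁*c₃*y₂*y₂*c₄*x₂*t*v*s₃*x̄₃*c₈*c₉*c₉*c₈*c₈)^3 * c₁⁻¹. -/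
/-- A positive rewriting of the fourth power of `a * b` that exhibits a factor `a ^ 3` on the left. -/
theorem pow_four_eq_of_braid {G : Type*} [Group G] {a b : G} (h : b * a * b = a * b * a) :
    (a * b) ^ 4 = a * a * a * (b * a * a * b * b) := by
  calc (a * b) ^ 4 = a * (b * a * b) * (a * b * a) * b := by
        simp only [pow_succ, pow_zero, one_mul, mul_assoc]
    _ = a * (a * b * a) * (a * b * a) * b := by rw [h]
    _ = a * (a * b * a) * (b * a * b) * b := by rw [← h]
    _ = a * (a * (b * a * b)) * a * b * b := by simp only [mul_assoc]
    _ = a * (a * (a * b * a)) * a * b * b := by rw [h]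
    _ = a * a * a * (b * a * a * b * b) := by simp only [mul_assoc]

/-- Rewriting the square of `c * e * c * f` through the conjugate `f⁻¹ * c * e * c⁻¹ * f`. -/
theorem braid_word_sq_eq_conj {G : Type*} [Group G] {c e f : G}
    (hce : c * e * c = e * c * e) (hcf : c * f * c = f * c * f) (hef : e * f = f * e) :
    (c * e * c * f) ^ 2 =
      e * f * ((f⁻¹ * c * e * c⁻¹ * f) * (f⁻¹ * c * e * c⁻¹ * f) * c) * (f * (e * f)) := by
  have hconj : c⁻¹ * f * c = f * c * f⁻¹ := by
    rw [eq_mul_inv_iff_mul_eq, mul_assoc, mul_assoc, inv_mul_eq_iff_eq_mul, ← mul_assoc,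
      ← mul_assoc, hcf, mul_assoc]
  calc (c * e * c * f) ^ 2 = (c * e * c) * f * (c * e * c) * f := by
        simp only [pow_two, mul_assoc]
    _ = (e * c * e) * f * (e * c * e) * f := by rw [hce]
    _ = e * c * e * (f * e) * c * (e * f) := by simp only [mul_assoc]
    _ = e * c * e * (e * f) * c * (e * f) := by rw [hef]
    _ = e * c * e * e * (f * c * f⁻¹) * (f * (e * f)) := by group
    _ = e * c * e * e * (c⁻¹ * f * c) * (f * (e * f)) := by rw [hconj]
    _ = _ := by group

theorem genus_four_word {G : Type*} [Group G]
    (c₁ c₂ c₃ c₄ c₅ c₆ c₇ c₈ c₉ e₁ f₁ e₂ f₂ x₁ x₂ x₃ xb₃ δ₁ δ₂ δ₃ t v : G)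
    (hb₁ : c₁ * c₂ * c₁ = c₂ * c₁ * c₂)
    (hb₂ : c₄ * e₁ * c₄ = e₁ * c₄ * e₁)
    (hb₃ : c₄ * f₁ * c₄ = f₁ * c₄ * f₁)
    (hb₄ : c₆ * e₂ * c₆ = e₂ * c₆ * e₂)
    (hb₅ : c₈ * c₉ * c₈ = c₉ * c₈ * c₉)
    (hchain₁ : (c₄ * e₁ * c₄ * f₁) ^ 3 = δ₁ * δ₂)
    (hchain₂ : (c₉ * c₈) ^ 6 = δ₃)
    (hlantern₁ : δ₁ * x₁ * c₃ = c₁ * c₁ * e₁ * f₁)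
    (hlantern₂ : δ₂ * x₂ * c₅ = e₁ * f₁ * e₂ * f₂)
    (hlantern₃ : δ₃ * x₃ * c₇ = e₂ * f₂ * c₉ * c₉)
    (hlantern₄ : f₂ * t * v = f₁ * c₅ * c₇ * c₉)
    (hx₃ : c₇ * xb₃ = x₃ * c₇)
    (hδ : ∀ a ∈ [δ₁, δ₂, δ₃],
      ∀ b ∈ [δ₁, δ₂, δ₃, c₁, c₂, c₃, c₄, c₅, c₆, c₇, c₈, c₉, e₁, f₁, e₂, f₂,
        x₁, x₂, x₃, xb₃, t, v], a * b = b * a)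
    (hef₁ : e₁ * f₁ = f₁ * e₁)
    (hef₂ : e₂ * f₂ = f₂ * e₂)
    (h₁₂ : ∀ a ∈ [e₁, f₁], ∀ b ∈ [e₂, f₂, x₂, c₅], a * b = b * a)
    (h₂₃ : ∀ a ∈ [e₂, f₂], ∀ b ∈ [x₃, c₇, c₉], a * b = b * a)
    (hpair : List.Pairwise (fun a b => a * b = b * a) [f₁, c₅, c₇, c₉])
    (hf₁ : ∀ b ∈ [x₂, t, v], f₁ * b = b * f₁)
    (htv : ∀ a ∈ [t, v], a * c₅ = c₅ * a)
    (hc₉ : ∀ b ∈ [c₆, x₃, xb₃], c₉ * b = b * c₉)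
    (hc₁ : ∀ b ∈ [c₃, c₄, c₅, c₆, c₇, c₈, c₉, e₁, f₁, x₁, x₂, t, v, xb₃],
      c₁ * b = b * c₁) :
    (c₁ * c₂) ^ 2 * (c₄ * e₁ * c₄ * f₁)⁻¹ * (c₆ * e₂ * c₆ * f₂) * ((c₉ * c₈) ^ 2)⁻¹ =
        c₁ * c₁ * c₂ * c₁⁻¹ * x₁ * c₃ * (f₁⁻¹ * c₄ * e₁ * c₄⁻¹ * f₁) *
          (f₁⁻¹ * c₄ * e₁ * c₄⁻¹ * f₁) * c₄ * x₂ * t * v * (c₇⁻¹ * c₆ * c₇) * xb₃ *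
          c₈ * c₉ * c₉ * c₈ * c₈ ∧
    ((c₁ * c₂) ^ 2 * (c₄ * e₁ * c₄ * f₁)⁻¹ * (c₆ * e₂ * c₆ * f₂) * ((c₉ * c₈) ^ 2)⁻¹) ^ 3 =
        c₁ * (c₁ * c₂ * x₁ * c₃ * (f₁⁻¹ * c₄ * e₁ * c₄⁻¹ * f₁) *
          (f₁⁻¹ * c₄ * e₁ * c₄⁻¹ * f₁) * c₄ * x₂ * t * v * (c₇⁻¹ * c₆ * c₇) * xb₃ *
          c₈ * c₉ * c₉ * c₈ * c₈) ^ 3 * c₁⁻¹ := by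
  have hδ₁ : ∀ b ∈ [δ₂, c₃, e₁, f₁, x₁], Commute δ₁ b := fun b hb =>
    hδ δ₁ (by simp) b (by simp at hb ⊢; tauto)
  have hδ₂ : ∀ b ∈ [c₄, e₁, f₁], Commute δ₂ b := fun b hb =>
    hδ δ₂ (by simp) b (by simp at hb ⊢; tauto)
  have hδ₃ : ∀ b ∈ [e₂, f₂], Commute δ₃ b := fun b hb =>
    hδ δ₃ (by simp) b (by simp at hb ⊢; tauto)
  clear hδ
  simp only [List.forall_mem_cons, List.not_mem_nil, List.pairwise_cons, List.Pairwise.nil,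
    IsEmpty.forall_iff, implies_true, and_true, ← commute_iff_eq]
    at hδ₁ hδ₂ hδ₃ h₁₂ hpair htv hc₉ hc₁
  obtain ⟨δ₁δ₂, δ₁c₃, δ₁e₁, δ₁f₁, δ₁x₁⟩ := hδ₁
  obtain ⟨δ₂c₄, δ₂e₁, δ₂f₁⟩ := hδ₂
  obtain ⟨δ₃e₂, δ₃f₂⟩ := hδ₃
  obtain ⟨-, -, f₁f₂, f₁x₂, f₁c₅⟩ := h₁₂
  obtain ⟨-, ⟨c₅c₇, c₅c₉⟩, c₇c₉⟩ := hpair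
  obtain ⟨tc₅, vc₅⟩ := htv
  obtain ⟨c₉c₆, -, c₉xb₃⟩ := hc₉
  obtain ⟨c₁c₃, c₁c₄, -, c₁c₆, c₁c₇, c₁c₈, c₁c₉, c₁e₁, c₁f₁, c₁x₁, c₁x₂, c₁t, c₁v, c₁xb₃⟩ := hc₁
  have hchain₁' : (c₄ * e₁ * c₄ * f₁)⁻¹ = δ₂⁻¹ * δ₁⁻¹ * (c₄ * e₁ * c₄ * f₁) ^ 2 := by
    rw [← mul_inv_rev, ← hchain₁]
    group
  have hchain₂' : ((c₉ * c₈) ^ 2)⁻¹ = δ₃⁻¹ * (c₉ * c₈) ^ 4 := by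
    rw [← hchain₂]
    group
  have hsq₁ : c₁ * c₁ = δ₁ * (x₁ * c₃ * (e₁ * f₁)⁻¹) := by
    rw [← mul_assoc, ← mul_assoc, hlantern₁]
    group
  have hquot₂ : e₁ * f₁ * δ₂⁻¹ = x₂ * c₅ * (e₂ * f₂)⁻¹ := by
    rw [← (δ₂e₁.mul_right δ₂f₁).inv_left.eq, inv_mul_eq_iff_eq_mul, ← mul_assoc, ← mul_assoc,
      hlantern₂]
    group
  have hquot₃ : e₂ * f₂ * δ₃⁻¹ = c₇ * xb₃ * (c₉ * c₉)⁻¹ := by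
    rw [← (δ₃e₂.mul_right δ₃f₂).inv_left.eq, inv_mul_eq_iff_eq_mul, hx₃, ← mul_assoc, ← mul_assoc,
      hlantern₃]
    group
  have htv₅ : t * v = f₂⁻¹ * (f₁ * c₅ * c₇ * c₉) := by
    rw [← hlantern₄]
    group
  have c₅f₂ : Commute c₅ f₂ := by
    have hf₂ : f₂ = f₁ * c₅ * c₇ * c₉ * (t * v)⁻¹ := by
      rw [← hlantern₄]
      group
    rw [hf₂]
    exact (((f₁c₅.symm.mul_right (.refl _)).mul_right c₅c₇).mul_right c₅c₉).mul_right
      (tc₅.symm.mul_right vc₅.symm).inv_right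
  have hfc : f₁ * c₅ * f₂⁻¹ = t * v * (c₇ * c₉)⁻¹ := by
    rw [htv₅, ((f₁f₂.mul_left c₅f₂).inv_right).eq]
    group
  have hhead : c₁ * c₁ * (c₄ * e₁ * c₄ * f₁)⁻¹ =
      x₁ * c₃ * ((f₁⁻¹ * c₄ * e₁ * c₄⁻¹ * f₁) * (f₁⁻¹ * c₄ * e₁ * c₄⁻¹ * f₁) * c₄) *
        (f₁ * (x₂ * c₅ * (e₂ * f₂)⁻¹)) := by
    have hδ₁u : Commute δ₁ (x₁ * c₃ * (e₁ * f₁)⁻¹ * δ₂⁻¹) :=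
      ((δ₁x₁.mul_right δ₁c₃).mul_right (δ₁e₁.mul_right δ₁f₁).inv_right).mul_right δ₁δ₂.inv_right
    have hδ₂A : Commute δ₂⁻¹ ((c₄ * e₁ * c₄ * f₁) ^ 2) :=
      ((((δ₂c₄.mul_right δ₂e₁).mul_right δ₂c₄).mul_right δ₂f₁).pow_right 2).inv_left
    calc c₁ * c₁ * (c₄ * e₁ * c₄ * f₁)⁻¹
        = δ₁ * (x₁ * c₃ * (e₁ * f₁)⁻¹ * δ₂⁻¹) * δ₁⁻¹ * (c₄ * e₁ * c₄ * f₁) ^ 2 := by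
          rw [hsq₁, hchain₁']
          simp only [mul_assoc]
      _ = x₁ * c₃ * (e₁ * f₁)⁻¹ * (δ₂⁻¹ * (c₄ * e₁ * c₄ * f₁) ^ 2) := by
          rw [hδ₁u.eq, mul_inv_cancel_right, mul_assoc _ δ₂⁻¹]
      _ = _ := by
          rw [hδ₂A.eq, braid_word_sq_eq_conj hb₂ hb₃ hef₁, ← hquot₂]
          group
  have htail : f₁ * (x₂ * c₅ * (e₂ * f₂)⁻¹) * (c₆ * e₂ * c₆ * f₂) * ((c₉ * c₈) ^ 2)⁻¹ =
      x₂ * t * v * (c₇⁻¹ * c₆ * c₇) * xb₃ * c₈ * c₉ * c₉ * c₈ * c₈ := by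
    have hc₉s : Commute c₉⁻¹ (c₇⁻¹ * c₆ * c₇ * xb₃) :=
      (((c₇c₉.symm.inv_right.mul_right c₉c₆).mul_right c₇c₉.symm).mul_right c₉xb₃).inv_left
    calc f₁ * (x₂ * c₅ * (e₂ * f₂)⁻¹) * (c₆ * e₂ * c₆ * f₂) * ((c₉ * c₈) ^ 2)⁻¹
        = (f₁ * x₂) * c₅ * (e₂ * f₂)⁻¹ * (e₂ * c₆ * e₂ * f₂) * (δ₃⁻¹ * (c₉ * c₈) ^ 4) := by
          rw [hb₄, hchain₂']
          simp only [mul_assoc]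
      _ = x₂ * (f₁ * c₅ * f₂⁻¹) * c₆ * (e₂ * f₂ * δ₃⁻¹) * (c₉ * c₈) ^ 4 := by
          rw [f₁x₂.eq]
          group
      _ = x₂ * t * v * (c₉⁻¹ * (c₇⁻¹ * c₆ * c₇ * xb₃)) * (c₉ * c₉)⁻¹ * (c₉ * c₈) ^ 4 := by
          rw [hfc, hquot₃]
          group
      _ = _ := by
          rw [hc₉s.eq, pow_four_eq_of_braid hb₅]
          group
  have hword : (c₁ * c₂) ^ 2 * (c₄ * e₁ * c₄ * f₁)⁻¹ * (c₆ * e₂ * c₆ * f₂) * ((c₉ * c₈) ^ 2)⁻¹ =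
      c₁ * c₁ * c₂ * c₁⁻¹ * x₁ * c₃ * (f₁⁻¹ * c₄ * e₁ * c₄⁻¹ * f₁) *
        (f₁⁻¹ * c₄ * e₁ * c₄⁻¹ * f₁) * c₄ * x₂ * t * v * (c₇⁻¹ * c₆ * c₇) * xb₃ *
        c₈ * c₉ * c₉ * c₈ * c₈ := by
    have hsq : (c₁ * c₂) ^ 2 = c₁ * c₁ * c₂ * c₁⁻¹ * (c₁ * c₁) := by
      rw [pow_two, mul_assoc, ← mul_assoc c₂, ← hb₁]
      group
    rw [hsq, mul_assoc _ (c₁ * c₁), hhead]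
    calc _ = c₁ * c₁ * c₂ * c₁⁻¹ * (x₁ * c₃ * ((f₁⁻¹ * c₄ * e₁ * c₄⁻¹ * f₁) *
            (f₁⁻¹ * c₄ * e₁ * c₄⁻¹ * f₁) * c₄)) *
          (f₁ * (x₂ * c₅ * (e₂ * f₂)⁻¹) * (c₆ * e₂ * c₆ * f₂) * ((c₉ * c₈) ^ 2)⁻¹) := by
          simp only [mul_assoc]
      _ = _ := by
          rw [htail]
          simp only [mul_assoc]
  refine ⟨hword, ?_⟩
  have hcomm : Commute c₁⁻¹ (x₁ * c₃ * (f₁⁻¹ * c₄ * e₁ * c₄⁻¹ * f₁) *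
      (f₁⁻¹ * c₄ * e₁ * c₄⁻¹ * f₁) * c₄ * x₂ * t * v * (c₇⁻¹ * c₆ * c₇) * xb₃ *
      c₈ * c₉ * c₉ * c₈ * c₈) := by
    have hy : Commute c₁ (f₁⁻¹ * c₄ * e₁ * c₄⁻¹ * f₁) :=
      (((c₁f₁.inv_right.mul_right c₁c₄).mul_right c₁e₁).mul_right c₁c₄.inv_right).mul_right c₁f₁
    have hs : Commute c₁ (c₇⁻¹ * c₆ * c₇) :=
      (c₁c₇.inv_right.mul_right c₁c₆).mul_right c₁c₇
    apply Commute.inv_left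
    repeat' first | assumption | apply Commute.mul_right
  rw [hword, ← conj_pow]
  congr 1
  calc _ = c₁ * c₁ * c₂ * (c₁⁻¹ * (x₁ * c₃ * (f₁⁻¹ * c₄ * e₁ * c₄⁻¹ * f₁) *
        (f₁⁻¹ * c₄ * e₁ * c₄⁻¹ * f₁) * c₄ * x₂ * t * v * (c₇⁻¹ * c₆ * c₇) * xb₃ *
        c₈ * c₉ * c₉ * c₈ * c₈)) := by
        simp only [mul_assoc]
    _ = _ := by
        rw [hcomm.eq]
        simp only [mul_assoc]
end

section
/- Let G be a group and let a₁, b₁, a₂, b₂, a₃, b₃, α₁, α₂, α₃, d, x₁, c₁, x₂, c₂, x₃, c₃, δ₁, δ₂, δ₃ ∈ G. Assume: the braid relations aᵢ*bᵢ*aᵢ = bᵢ*aᵢ*bᵢ for i = 1, 2, 3; the star relation (α₁*α₂*α₃*d)^3 = δ₁*δ₂*δ₃; the lantern relations δ₁*x₁*c₁ = a₁*a₁*α₁*α₂, δ₂*x₂*c₂ = a₂*a₂*α₂*α₃, δ₃*x₃*c₃ = a₃*a₃*α₃*α₁; that δ₁, δ₂, δ₃ commute with each other and with every other listed element; that α₁,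 α₂, α₃ pairwise commute and each commutes with each of x₁, c₁, x₂, c₂, x₃, c₃; and that each aᵢ commutes with a_j and b_j for j ≠ i, with each of x₁, c₁, x₂, c₂, x₃, c₃, and with each of α₁, α₂, α₃. Set r = (α₁*α₂*α₃)⁻¹ * d * (α₁*α₂*α₃). Then (b₁*a₁)^2 * (b₂*a₂)^2 * (b₃*a₃)^2 * (α₁*α₂*α₃*d)⁻¹ = a₁*b₁*a₂*b₂*a₃*b₃*x₁*c₁*x₂*c₂*x₃*c₃*r*d, and consequently its cube equals (a₁*b₁*a₂*b₂*a₃*b₃*x₁*c₁*x₂*c₂*x₃*c₃*r*d)^3. -/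
theorem sq_mul_eq_of_braid {G : Type*} [Group G] {a b : G} (h : a * b * a = b * a * b) :
    (b * a) ^ 2 = a * b * a ^ 2 := by
  rw [sq, ← mul_assoc, ← h, sq, ← mul_assoc]

theorem mul_mul_mul_comm_of_commute {G : Type*} [Group G] {u v s t : G} (h : Commute s v) :
    u * s * (v * t) = u * v * (s * t) := by
  rw [mul_assoc, h.left_comm, mul_assoc]

theorem genus_four_rose {G : Type*} [Group G]
    (a₁ b₁ a₂ b₂ a₃ b₃ α₁ α₂ α₃ d x₁ c₁ x₂ c₂ x₃ c₃ δ₁ δ₂ δ₃ : G)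
    (hbr₁ : a₁ * b₁ * a₁ = b₁ * a₁ * b₁)
    (hbr₂ : a₂ * b₂ * a₂ = b₂ * a₂ * b₂)
    (hbr₃ : a₃ * b₃ * a₃ = b₃ * a₃ * b₃)
    (hstar : (α₁ * α₂ * α₃ * d) ^ 3 = δ₁ * δ₂ * δ₃)
    (hlantern₁ : δ₁ * x₁ * c₁ = a₁ * a₁ * α₁ * α₂)
    (hlantern₂ : δ₂ * x₂ * c₂ = a₂ * a₂ * α₂ * α₃)
    (hlantern₃ : δ₃ * x₃ * c₃ = a₃ * a₃ * α₃ * α₁)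
    (hδ : ∀ u ∈ [δ₁, δ₂, δ₃],
      ∀ w ∈ [δ₁, δ₂, δ₃, a₁, b₁, a₂, b₂, a₃, b₃, α₁, α₂, α₃, d, x₁, c₁, x₂, c₂, x₃, c₃],
      u * w = w * u)
    (hα : List.Pairwise (fun u w => u * w = w * u) [α₁, α₂, α₃])
    (hαxc : ∀ u ∈ [α₁, α₂, α₃], ∀ w ∈ [x₁, c₁, x₂, c₂, x₃, c₃], u * w = w * u)
    (ha₁₂ : a₁ * a₂ = a₂ * a₁) (ha₁₃ : a₁ * a₃ = a₃ * a₁) (ha₂₃ : a₂ * a₃ = a₃ * a₂)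
    (hab₁₂ : a₁ * b₂ = b₂ * a₁) (hab₁₃ : a₁ * b₃ = b₃ * a₁)
    (hab₂₁ : a₂ * b₁ = b₁ * a₂) (hab₂₃ : a₂ * b₃ = b₃ * a₂)
    (hab₃₁ : a₃ * b₁ = b₁ * a₃) (hab₃₂ : a₃ * b₂ = b₂ * a₃)
    (haxc : ∀ u ∈ [a₁, a₂, a₃], ∀ w ∈ [x₁, c₁, x₂, c₂, x₃, c₃], u * w = w * u)
    (haα : ∀ u ∈ [a₁, a₂, a₃], ∀ w ∈ [α₁, α₂, α₃], u * w = w * u) :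
    (b₁ * a₁) ^ 2 * (b₂ * a₂) ^ 2 * (b₃ * a₃) ^ 2 * (α₁ * α₂ * α₃ * d)⁻¹ =
        a₁ * b₁ * a₂ * b₂ * a₃ * b₃ * x₁ * c₁ * x₂ * c₂ * x₃ * c₃ *
          ((α₁ * α₂ * α₃)⁻¹ * d * (α₁ * α₂ * α₃)) * d ∧
    ((b₁ * a₁) ^ 2 * (b₂ * a₂) ^ 2 * (b₃ * a₃) ^ 2 * (α₁ * α₂ * α₃ * d)⁻¹) ^ 3 =
        (a₁ * b₁ * a₂ * b₂ * a₃ * b₃ * x₁ * c₁ * x₂ * c₂ * x₃ * c₃ *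
          ((α₁ * α₂ * α₃)⁻¹ * d * (α₁ * α₂ * α₃)) * d) ^ 3 := by
  simp only [List.pairwise_cons, List.mem_cons, List.not_mem_nil, or_false, forall_eq_or_imp,
    forall_eq] at hδ hα haα
  have key : (b₁ * a₁) ^ 2 * (b₂ * a₂) ^ 2 * (b₃ * a₃) ^ 2 * (α₁ * α₂ * α₃ * d)⁻¹ =
      a₁ * b₁ * a₂ * b₂ * a₃ * b₃ * x₁ * c₁ * x₂ * c₂ * x₃ * c₃ *
        ((α₁ * α₂ * α₃)⁻¹ * d * (α₁ * α₂ * α₃)) * d := by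
    have squares : (b₁ * a₁) ^ 2 * (b₂ * a₂) ^ 2 * (b₃ * a₃) ^ 2 =
        a₁ * b₁ * (a₂ * b₂) * (a₃ * b₃) * (a₁ ^ 2 * a₂ ^ 2 * a₃ ^ 2) := by
      have h₂ : Commute (a₁ ^ 2) (a₂ * b₂) := (Commute.mul_right ha₁₂ hab₁₂).pow_left 2
      have h₃ : Commute (a₁ ^ 2 * a₂ ^ 2) (a₃ * b₃) :=
        ((Commute.mul_right ha₁₃ hab₁₃).pow_left 2).mul_left
          ((Commute.mul_right ha₂₃ hab₂₃).pow_left 2)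
      rw [sq_mul_eq_of_braid hbr₁, sq_mul_eq_of_braid hbr₂, sq_mul_eq_of_braid hbr₃,
        mul_mul_mul_comm_of_commute h₂, mul_mul_mul_comm_of_commute h₃]
    obtain ⟨⟨hα₁₂, hα₁₃⟩, hα₂₃, -⟩ := hα
    obtain ⟨-, ⟨a₂α₁, a₂α₂, -⟩, a₃α₁, a₃α₂, a₃α₃⟩ := haα
    have lanterns : δ₁ * δ₂ * δ₃ * (x₁ * c₁ * (x₂ * c₂) * (x₃ * c₃)) =
        a₁ ^ 2 * a₂ ^ 2 * a₃ ^ 2 * (α₁ * α₂ * α₃) ^ 2 := by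
      have δ₂L : Commute δ₂ (x₁ * c₁) := by
        apply Commute.mul_right <;> simp only [Commute, SemiconjBy, hδ]
      have δ₃L : Commute δ₃ (x₁ * c₁ * (x₂ * c₂)) := by
        refine Commute.mul_right (Commute.mul_right ?_ ?_) (Commute.mul_right ?_ ?_) <;>
          simp only [Commute, SemiconjBy, hδ]
      have aA : Commute (α₁ * α₂) (a₂ ^ 2) :=
        ((Commute.mul_right a₂α₁ a₂α₂).pow_left 2).symm
      have aA' : Commute (α₁ * α₂ * (α₂ * α₃)) (a₃ ^ 2) :=
        ((Commute.mul_right (Commute.mul_right a₃α₁ a₃α₂)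
          (Commute.mul_right a₃α₂ a₃α₃)).pow_left 2).symm
      have αs : α₁ * α₂ * (α₂ * α₃) * (α₃ * α₁) = (α₁ * α₂ * α₃) ^ 2 := by
        have h : Commute (α₂ * α₃) (α₃ * α₁) :=
          (Commute.mul_right hα₂₃ (Eq.symm hα₁₂)).mul_left
            (Commute.mul_right rfl (Eq.symm hα₁₃))
        rw [mul_assoc, h.eq, sq]
        simp only [mul_assoc]
      calc δ₁ * δ₂ * δ₃ * (x₁ * c₁ * (x₂ * c₂) * (x₃ * c₃))
          = δ₁ * x₁ * c₁ * (δ₂ * x₂ * c₂) * (δ₃ * x₃ * c₃) := by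
            rw [mul_mul_mul_comm_of_commute δ₃L, mul_mul_mul_comm_of_commute δ₂L]
            simp only [mul_assoc]
        _ = a₁ ^ 2 * (α₁ * α₂) * (a₂ ^ 2 * (α₂ * α₃)) * (a₃ ^ 2 * (α₃ * α₁)) := by
            rw [hlantern₁, hlantern₂, hlantern₃]
            simp only [sq, mul_assoc]
        _ = a₁ ^ 2 * a₂ ^ 2 * a₃ ^ 2 * (α₁ * α₂ * α₃) ^ 2 := by
            rw [mul_mul_mul_comm_of_commute aA, mul_mul_mul_comm_of_commute aA', αs]
    have δs : Commute (δ₁ * δ₂ * δ₃) (a₁ ^ 2 * a₂ ^ 2 * a₃ ^ 2) := by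
      refine .mul_right (.mul_right (.pow_right ?_ 2) (.pow_right ?_ 2)) (.pow_right ?_ 2) <;>
        refine .mul_left (.mul_left ?_ ?_) ?_ <;> simp only [Commute, SemiconjBy, hδ]
    have tail : a₁ ^ 2 * a₂ ^ 2 * a₃ ^ 2 * (α₁ * α₂ * α₃ * d)⁻¹ =
        x₁ * c₁ * (x₂ * c₂) * (x₃ * c₃) *
          ((α₁ * α₂ * α₃)⁻¹ * d * (α₁ * α₂ * α₃)) * d := by
      apply mul_left_cancel (a := δ₁ * δ₂ * δ₃)
      rw [δs.left_comm, mul_assoc (x₁ * c₁ * _ * _), ← mul_assoc (δ₁ * δ₂ * δ₃) (x₁ * c₁ * _ * _),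
        lanterns, ← hstar]
      simp only [pow_succ, pow_zero, one_mul]
      group
    rw [squares, mul_assoc, tail]
    simp only [mul_assoc]
  exact ⟨key, congrArg (· ^ 3) key⟩
end

section
/- Let G be a group and let c₁, …, c₁₁, e₁, f₁, e₂, f₂, e₃, f₃, x₁, x₂, x₃, x̄₃, x₄, δ₁, δ₂, δ₃, δ₄, t, v ∈ G. Assume: the braid relations c₁*c₂*c₁ = c₂*c₁*c₂, c₄*e₁*c₄ = e₁*c₄*e₁, c₄*f₁*c₄ = f₁*c₄*f₁, c₆*e₂*c₆ = e₂*c₆*e₂, c₈*e₃*c₈ = e₃*c₈*e₃, c₈*f₃*c₈ = f₃*c₈*f₃, c₁₀*c₁₁*c₁₀ = c₁₁*c₁₀*c₁₁; the chain relations (c₄*e₁*c₄*f₁)^3 = δ₁*δ₂ and (c₈*e₃*c₈*f₃)^3 = δ₃*δ₄; the lantern relations δ₁*x₁*c₃ = c₁*c₁*e₁*f₁, δ₂*x₂*c₅ = e₁*f₁*e₂*f₂, δ₃*x₃*c₇ = e₂*f₂*e₃*f₃, δ₄*x₄*c₉ = e₃*f₃*c₁₁*c₁₁, and f₂*t*v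 = f₁*c₅*c₇*f₃; the identity c₇*x̄₃ = x₃*c₇; that δ₁, δ₂, δ₃, δ₄ commute with each other and with every other listed element; and the commutations: eᵢ commutes with fᵢ for i = 1, 2, 3; each of e₁, f₁ commutes with each of e₂, f₂, x₂, c₅; each of e₂, f₂ commutes with each of e₃, f₃, x₃, c₇; each of e₃, f₃ commutes with each of x₄, c₉, c₁₁; f₁, c₅, c₇, f₃ pairwise commute; f₁ commutes with x₂, t, v; t and v each commute with c₅; f₃ commutes with c₆ and x₃; c₁ commutes with each of c₃, c₄, c₅, c₆, c₇, c₈, c₉, c₁₀, c₁₁, e₁, f₁, e₃, f₃, x₁, x₂, x₄, t, v, x̄₃. Set y₂ = f₁⁻¹*c₄*e₁*c₄⁻¹*f₁, s₃ = c₇⁻¹*c₆*c₇, r₃ = f₃⁻¹*c₈*f₃, r̄₃ = c₈⁻¹*e₃*c₈. Then (c₁*c₂)^2 * (c₄*e₁*c₄*f₁)⁻¹ * (c₆*e₂*c₆*f₂) * (c₈*e₃*c₈*f₃)⁻¹ * (c₁₁*c₁₀)^2 = c₁*c₁*c₂*c₁⁻¹*x₁*c₃*y₂*y₂*c₄*x₂*t*v*s₃*x̄₃*r₃*r̄₃*r̄₃*x₄*c₉*c₁₀*c₁₁,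 and consequently the cube of the left-hand side equals c₁ * (c₁*c₂*x₁*c₃*y₂*y₂*c₄*x₂*t*v*s₃*x̄₃*r₃*r̄₃*r̄₃*x₄*c₉*c₁₀*c₁₁)^3 * c₁⁻¹. -/
/-- The square of `c * e * c * f` with a positive word in conjugates split off in the middle and
`e * f` on the left, `e * f * f` on the right. -/
theorem sq_chain_eq_left {G : Type*} [Group G] {c e f : G} (hce : c * e * c = e * c * e)
    (hcf : c * f * c = f * c * f) (hef : e * f = f * e) :
    (c * e * c * f) ^ 2 =
      e * f * (f⁻¹ * c * e * c⁻¹ * f) * (f⁻¹ * c * e * c⁻¹ * f) * c * (e * f * f) := by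
  have conj : c⁻¹ * f * c = f * c * f⁻¹ := by
    rw [eq_mul_inv_iff_mul_eq, mul_assoc, mul_assoc, inv_mul_eq_iff_eq_mul]
    simpa only [mul_assoc] using hcf.symm
  have comm : f⁻¹ * e * f = e := by rw [mul_assoc, hef, inv_mul_cancel_left]
  symm
  calc
    _ = e * c * e * e * (c⁻¹ * f * c) * e * f * f := by group
    _ = e * c * e * (e * f) * c * (f⁻¹ * e * f) * f := by rw [conj]; group
    _ = (e * c * e) * f * (e * c * e) * f := by rw [comm, hef]; group
    _ = (c * e * c * f) ^ 2 := by rw [← hce]; simp only [pow_two, mul_assoc]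

/-- The square of `c * e * c * f` with a positive word in conjugates split off in the middle and
`f * e * f` on the left, `e * f` on the right. -/
theorem sq_chain_eq_right {G : Type*} [Group G] {c e f : G} (hce : c * e * c = e * c * e)
    (hcf : c * f * c = f * c * f) (hef : e * f = f * e) :
    (c * e * c * f) ^ 2 =
      f * e * f * ((f⁻¹ * c * f) * (c⁻¹ * e * c) * (c⁻¹ * e * c) * (e * f)) := by
  have conj : c * f * c⁻¹ = f⁻¹ * c * f := by
    rw [mul_inv_eq_iff_eq_mul, mul_assoc, mul_assoc, eq_inv_mul_iff_mul_eq]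
    simpa only [mul_assoc] using hcf.symm
  have comm : f * e * f⁻¹ = e := by rw [← hef, mul_inv_cancel_right]
  symm
  calc
    _ = f * e * (c * f * c⁻¹) * e * e * c * e * f := by group
    _ = (f * e * f⁻¹) * c * (f * e) * e * c * e * f := by rw [conj]; group
    _ = (e * c * e) * f * (e * c * e) * f := by rw [comm, ← hef]; group
    _ = (c * e * c * f) ^ 2 := by rw [← hce]; simp only [pow_two, mul_assoc]

/-- If `a ^ 3 = d * d'` with `d'` commuting with `a`, then `a⁻¹` is a positive word up to
inverses of `d` and `d'`. -/
theorem inv_eq_of_pow_three_eq_mul {G : Type*} [Group G] {a d d' : G} (h : a ^ 3 = d * d')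
    (hd' : Commute d' a) : a⁻¹ = d⁻¹ * a ^ 2 * d'⁻¹ := by
  calc
    a⁻¹ = d' * a⁻¹ * d'⁻¹ := by rw [hd'.inv_right.eq, mul_inv_cancel_right]
    _ = d⁻¹ * (d * d') * a⁻¹ * d'⁻¹ := by group
    _ = d⁻¹ * a ^ 2 * d'⁻¹ := by rw [← h]; group

theorem genus_five_word {G : Type*} [Group G]
    (c₁ c₂ c₃ c₄ c₅ c₆ c₇ c₈ c₉ c₁₀ c₁₁ e₁ f₁ e₂ f₂ e₃ f₃
      x₁ x₂ x₃ xb₃ x₄ δ₁ δ₂ δ₃ δ₄ t v : G)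
    (hb₁ : c₁ * c₂ * c₁ = c₂ * c₁ * c₂)
    (hb₂ : c₄ * e₁ * c₄ = e₁ * c₄ * e₁)
    (hb₃ : c₄ * f₁ * c₄ = f₁ * c₄ * f₁)
    (hb₄ : c₆ * e₂ * c₆ = e₂ * c₆ * e₂)
    (hb₅ : c₈ * e₃ * c₈ = e₃ * c₈ * e₃)
    (hb₆ : c₈ * f₃ * c₈ = f₃ * c₈ * f₃)
    (hb₇ : c₁₀ * c₁₁ * c₁₀ = c₁₁ * c₁₀ * c₁₁)
    (hchain₁ : (c₄ * e₁ * c₄ * f₁) ^ 3 = δ₁ * δ₂)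
    (hchain₂ : (c₈ * e₃ * c₈ * f₃) ^ 3 = δ₃ * δ₄)
    (hlantern₁ : δ₁ * x₁ * c₃ = c₁ * c₁ * e₁ * f₁)
    (hlantern₂ : δ₂ * x₂ * c₅ = e₁ * f₁ * e₂ * f₂)
    (hlantern₃ : δ₃ * x₃ * c₇ = e₂ * f₂ * e₃ * f₃)
    (hlantern₄ : δ₄ * x₄ * c₉ = e₃ * f₃ * c₁₁ * c₁₁)
    (hlantern₅ : f₂ * t * v = f₁ * c₅ * c₇ * f₃)
    (hx₃ : c₇ * xb₃ = x₃ * c₇)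
    (hδ : ∀ a ∈ [δ₁, δ₂, δ₃, δ₄],
      ∀ b ∈ [δ₁, δ₂, δ₃, δ₄, c₁, c₂, c₃, c₄, c₅, c₆, c₇, c₈, c₉, c₁₀, c₁₁,
        e₁, f₁, e₂, f₂, e₃, f₃, x₁, x₂, x₃, xb₃, x₄, t, v], a * b = b * a)
    (hef₁ : e₁ * f₁ = f₁ * e₁)
    (hef₂ : e₂ * f₂ = f₂ * e₂)
    (hef₃ : e₃ * f₃ = f₃ * e₃)
    (h₁₂ : ∀ a ∈ [e₁, f₁], ∀ b ∈ [e₂, f₂, x₂, c₅], a * b = b * a)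
    (h₂₃ : ∀ a ∈ [e₂, f₂], ∀ b ∈ [e₃, f₃, x₃, c₇], a * b = b * a)
    (h₃₄ : ∀ a ∈ [e₃, f₃], ∀ b ∈ [x₄, c₉, c₁₁], a * b = b * a)
    (hpair : List.Pairwise (fun a b => a * b = b * a) [f₁, c₅, c₇, f₃])
    (hf₁ : ∀ b ∈ [x₂, t, v], f₁ * b = b * f₁)
    (htv : ∀ a ∈ [t, v], a * c₅ = c₅ * a)
    (hf₃ : ∀ b ∈ [c₆, x₃], f₃ * b = b * f₃)
    (hc₁ : ∀ b ∈ [c₃, c₄, c₅, c₆, c₇, c₈, c₉, c₁₀, c₁₁, e₁, f₁, e₃, f₃,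
      x₁, x₂, x₄, t, v, xb₃], c₁ * b = b * c₁) :
    (c₁ * c₂) ^ 2 * (c₄ * e₁ * c₄ * f₁)⁻¹ * (c₆ * e₂ * c₆ * f₂) *
        (c₈ * e₃ * c₈ * f₃)⁻¹ * (c₁₁ * c₁₀) ^ 2 =
      c₁ * c₁ * c₂ * c₁⁻¹ * x₁ * c₃ * (f₁⁻¹ * c₄ * e₁ * c₄⁻¹ * f₁) *
        (f₁⁻¹ * c₄ * e₁ * c₄⁻¹ * f₁) * c₄ * x₂ * t * v * (c₇⁻¹ * c₆ * c₇) * xb₃ *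
        (f₃⁻¹ * c₈ * f₃) * (c₈⁻¹ * e₃ * c₈) * (c₈⁻¹ * e₃ * c₈) * x₄ * c₉ * c₁₀ * c₁₁ ∧
    ((c₁ * c₂) ^ 2 * (c₄ * e₁ * c₄ * f₁)⁻¹ * (c₆ * e₂ * c₆ * f₂) *
        (c₈ * e₃ * c₈ * f₃)⁻¹ * (c₁₁ * c₁₀) ^ 2) ^ 3 =
      c₁ * (c₁ * c₂ * x₁ * c₃ * (f₁⁻¹ * c₄ * e₁ * c₄⁻¹ * f₁) *
        (f₁⁻¹ * c₄ * e₁ * c₄⁻¹ * f₁) * c₄ * x₂ * t * v * (c₇⁻¹ * c₆ * c₇) * xb₃ *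
        (f₃⁻¹ * c₈ * f₃) * (c₈⁻¹ * e₃ * c₈) * (c₈⁻¹ * e₃ * c₈) * x₄ * c₉ * c₁₀ * c₁₁) ^ 3 *
        c₁⁻¹ := by
  have cδ {a b : G} (ha : a ∈ [δ₁, δ₂, δ₃, δ₄])
      (hb : b ∈ [δ₁, δ₂, δ₃, δ₄, c₁, c₂, c₃, c₄, c₅, c₆, c₇, c₈, c₉, c₁₀, c₁₁,
        e₁, f₁, e₂, f₂, e₃, f₃, x₁, x₂, x₃, xb₃, x₄, t, v]) : Commute a b := hδ a ha b hb
  have c₁₂ {a b : G} (ha : a ∈ [e₁, f₁]) (hb : b ∈ [e₂, f₂, x₂, c₅]) : Commute a b :=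
    h₁₂ a ha b hb
  have c₂₃ {a b : G} (ha : a ∈ [e₂, f₂]) (hb : b ∈ [e₃, f₃, x₃, c₇]) : Commute a b :=
    h₂₃ a ha b hb
  have cc₁ {b : G} (hb : b ∈ [c₃, c₄, c₅, c₆, c₇, c₈, c₉, c₁₀, c₁₁, e₁, f₁, e₃, f₃,
      x₁, x₂, x₄, t, v, xb₃]) : Commute c₁ b := hc₁ b hb
  have inv₁ : (c₄ * e₁ * c₄ * f₁)⁻¹ = δ₁⁻¹ * (c₄ * e₁ * c₄ * f₁) ^ 2 * δ₂⁻¹ :=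
    inv_eq_of_pow_three_eq_mul hchain₁ ((((cδ (by simp) (by simp)).mul_right
      (cδ (by simp) (by simp))).mul_right (cδ (by simp) (by simp))).mul_right
      (cδ (by simp) (by simp)))
  have inv₂ : (c₈ * e₃ * c₈ * f₃)⁻¹ = δ₃⁻¹ * (c₈ * e₃ * c₈ * f₃) ^ 2 * δ₄⁻¹ :=
    inv_eq_of_pow_three_eq_mul hchain₂ ((((cδ (by simp) (by simp)).mul_right
      (cδ (by simp) (by simp))).mul_right (cδ (by simp) (by simp))).mul_right
      (cδ (by simp) (by simp)))
  -- The first lantern absorbs `δ₁⁻¹`.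
  have left : (c₁ * c₂) ^ 2 * δ₁⁻¹ * (e₁ * f₁) = c₁ * c₁ * c₂ * c₁⁻¹ * (x₁ * c₃) := by
    have hx : x₁ * c₃ = δ₁⁻¹ * (c₁ * c₁ * e₁ * f₁) := by
      rw [← hlantern₁]; group
    have hc : c₁⁻¹ * δ₁⁻¹ = δ₁⁻¹ * c₁⁻¹ :=
      (cδ (a := δ₁) (b := c₁) (by simp) (by simp)).symm.inv_inv.eq
    calc
      _ = c₁ * (c₂ * c₁ * c₂) * δ₁⁻¹ * (e₁ * f₁) := by simp only [pow_two, mul_assoc]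
      _ = c₁ * c₁ * c₂ * (c₁ * δ₁⁻¹) * (e₁ * f₁) := by rw [← hb₁]; group
      _ = c₁ * c₁ * c₂ * (δ₁⁻¹ * c₁) * (e₁ * f₁) := by
        rw [(cδ (a := δ₁) (b := c₁) (by simp) (by simp)).symm.inv_right.eq]
      _ = c₁ * c₁ * c₂ * (δ₁⁻¹ * c₁⁻¹) * (c₁ * c₁ * e₁ * f₁) := by group
      _ = c₁ * c₁ * c₂ * c₁⁻¹ * (x₁ * c₃) := by rw [hx, ← hc]; group
  -- The fourth lantern absorbs `δ₄⁻¹`.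
  have right : e₃ * f₃ * δ₄⁻¹ * (c₁₁ * c₁₀) ^ 2 = x₄ * c₉ * c₁₀ * c₁₁ := by
    have hx : x₄ * c₉ = δ₄⁻¹ * (e₃ * f₃ * c₁₁ * c₁₁) := by
      rw [← hlantern₄]; group
    have hc : e₃ * f₃ * δ₄⁻¹ = δ₄⁻¹ * (e₃ * f₃) :=
      ((cδ (a := δ₄) (b := e₃) (by simp) (by simp)).mul_right
        (cδ (b := f₃) (by simp) (by simp))).symm.inv_right.eq
    calc
      _ = δ₄⁻¹ * (e₃ * f₃) * c₁₁ * (c₁₀ * c₁₁ * c₁₀) := by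
        rw [hc]; simp only [pow_two, mul_assoc]
      _ = x₄ * c₉ * c₁₀ * c₁₁ := by rw [hb₇, hx]; simp only [mul_assoc]
  -- The remaining three lanterns absorb `δ₂⁻¹`, `δ₃⁻¹` and the unwanted twists between them.
  have middle : e₁ * f₁ * f₁ * δ₂⁻¹ * (c₆ * e₂ * c₆ * f₂) * δ₃⁻¹ * (f₃ * e₃ * f₃) =
      x₂ * t * v * (c₇⁻¹ * c₆ * c₇) * xb₃ := by
    have hx₂ : x₂ = δ₂⁻¹ * (e₁ * f₁ * e₂ * f₂) * c₅⁻¹ := by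
      rw [← hlantern₂]; group
    have hxb₃ : c₇ * xb₃ = δ₃⁻¹ * (e₂ * f₂ * e₃ * f₃) := by
      rw [hx₃, ← hlantern₃]; group
    have htvc : c₅⁻¹ * (t * v) = t * v * c₅⁻¹ :=
      (Commute.mul_left (htv t (by simp)) (htv v (by simp))).symm.inv_left.eq
    have hpair' : Commute c₅ (c₇ * f₃) ∧ Commute c₇ f₃ := by
      simp only [List.pairwise_cons, List.mem_cons, List.not_mem_nil, or_false,
        forall_eq_or_imp, forall_eq] at hpair
      exact ⟨Commute.mul_right hpair.2.1.1 hpair.2.1.2, hpair.2.2.1⟩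
    have hred : f₂ * c₅⁻¹ * t * v * c₇⁻¹ = f₁ * f₃ := by
      calc
        _ = f₂ * (c₅⁻¹ * (t * v)) * c₇⁻¹ := by group
        _ = f₂ * t * v * c₅⁻¹ * c₇⁻¹ := by rw [htvc]; group
        _ = f₁ * (c₅ * (c₇ * f₃)) * c₅⁻¹ * c₇⁻¹ := by rw [hlantern₅]; group
        _ = f₁ * f₃ := by rw [hpair'.1.eq, hpair'.2.eq]; group
    have hδ₂ : e₁ * f₁ * f₁ * δ₂⁻¹ = δ₂⁻¹ * (e₁ * f₁ * f₁) :=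
      (((cδ (a := δ₂) (b := e₁) (by simp) (by simp)).mul_right
        (cδ (b := f₁) (by simp) (by simp))).mul_right
        (cδ (b := f₁) (by simp) (by simp))).symm.inv_right.eq
    have hδ₃ : e₂ * f₂ * δ₃⁻¹ = δ₃⁻¹ * (e₂ * f₂) :=
      ((cδ (a := δ₃) (b := e₂) (by simp) (by simp)).mul_right
        (cδ (b := f₂) (by simp) (by simp))).symm.inv_right.eq
    have hδf : δ₃⁻¹ * f₃ = f₃ * δ₃⁻¹ :=
      (cδ (a := δ₃) (b := f₃) (by simp) (by simp)).inv_left.eq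
    have hef : e₂ * f₂ * f₃ = f₃ * (e₂ * f₂) :=
      ((c₂₃ (a := e₂) (b := f₃) (by simp) (by simp)).mul_left
        (c₂₃ (a := f₂) (by simp) (by simp))).eq
    have hfe : f₁ * e₂ = e₂ * f₁ := (c₁₂ (by simp) (by simp)).eq
    have hfc : c₆ * f₃ = f₃ * c₆ := (hf₃ c₆ (by simp)).symm
    calc
      _ = δ₂⁻¹ * (e₁ * f₁ * f₁) * (c₆ * e₂ * c₆) * f₂ * (δ₃⁻¹ * f₃) * e₃ * f₃ := by
        rw [hδ₂]; simp only [mul_assoc]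
      _ = δ₂⁻¹ * e₁ * f₁ * (f₁ * e₂) * c₆ * (e₂ * f₂ * f₃) * δ₃⁻¹ * e₃ * f₃ := by
        rw [hb₄, hδf]; simp only [mul_assoc]
      _ = δ₂⁻¹ * e₁ * f₁ * e₂ * f₁ * (c₆ * f₃) * (e₂ * f₂ * δ₃⁻¹) * e₃ * f₃ := by
        rw [hfe, hef]; simp only [mul_assoc]
      _ = δ₂⁻¹ * e₁ * f₁ * e₂ * (f₁ * f₃) * c₆ * (δ₃⁻¹ * (e₂ * f₂ * e₃ * f₃)) := by
        rw [hfc, hδ₃]; simp only [mul_assoc]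
      _ = δ₂⁻¹ * (e₁ * f₁ * e₂ * f₂) * c₅⁻¹ * t * v * (c₇⁻¹ * c₆ * c₇) * xb₃ := by
        rw [← hred, ← hxb₃]; simp only [mul_assoc]
      _ = _ := by rw [← hx₂]
  have hword : (c₁ * c₂) ^ 2 * (c₄ * e₁ * c₄ * f₁)⁻¹ * (c₆ * e₂ * c₆ * f₂) *
        (c₈ * e₃ * c₈ * f₃)⁻¹ * (c₁₁ * c₁₀) ^ 2 =
      c₁ * c₁ * c₂ * c₁⁻¹ * x₁ * c₃ * (f₁⁻¹ * c₄ * e₁ * c₄⁻¹ * f₁) *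
        (f₁⁻¹ * c₄ * e₁ * c₄⁻¹ * f₁) * c₄ * x₂ * t * v * (c₇⁻¹ * c₆ * c₇) * xb₃ *
        (f₃⁻¹ * c₈ * f₃) * (c₈⁻¹ * e₃ * c₈) * (c₈⁻¹ * e₃ * c₈) * x₄ * c₉ * c₁₀ * c₁₁ := by
    rw [inv₁, inv₂, sq_chain_eq_left hb₂ hb₃ hef₁, sq_chain_eq_right hb₅ hb₆ hef₃]
    generalize f₁⁻¹ * c₄ * e₁ * c₄⁻¹ * f₁ = y
    generalize f₃⁻¹ * c₈ * f₃ = r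
    generalize c₈⁻¹ * e₃ * c₈ = r'
    calc
      _ = ((c₁ * c₂) ^ 2 * δ₁⁻¹ * (e₁ * f₁)) * y * y * c₄ *
          (e₁ * f₁ * f₁ * δ₂⁻¹ * (c₆ * e₂ * c₆ * f₂) * δ₃⁻¹ * (f₃ * e₃ * f₃)) *
          r * r' * r' * (e₃ * f₃ * δ₄⁻¹ * (c₁₁ * c₁₀) ^ 2) := by
        simp only [mul_assoc]
      _ = _ := by rw [left, middle, right]; simp only [mul_assoc]
  refine ⟨hword, ?_⟩
  have hcomm : Commute c₁ (x₁ * c₃ * (f₁⁻¹ * c₄ * e₁ * c₄⁻¹ * f₁) *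
      (f₁⁻¹ * c₄ * e₁ * c₄⁻¹ * f₁) * c₄ * x₂ * t * v * (c₇⁻¹ * c₆ * c₇) * xb₃ *
      (f₃⁻¹ * c₈ * f₃) * (c₈⁻¹ * e₃ * c₈) * (c₈⁻¹ * e₃ * c₈) * x₄ * c₉ * c₁₀ * c₁₁) := by
    repeat' apply Commute.mul_right
    all_goals first
      | exact (cc₁ (by simp)).inv_right
      | exact cc₁ (by simp)
  rw [hword, ← conj_pow]
  congr 1
  simpa only [mul_assoc] using congrArg (c₁ * c₁ * c₂ * ·) hcomm.inv_left.eq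
end

section
/- Let G be a group, let g ≥ 4 be an even integer, and let c₁, …, c_{2g+1}, e₁, …, e_{g−2}, f₁, …, f_{g−2}, x₁, …, x_{g−1}, δ₁, …, δ_{g−1} ∈ G. Assume: the braid relations a*b*a = b*a*b for the pairs (c₁, c₂), (c_{2g}, c_{2g+1}), and (c_{2i+2}, e_i), (c_{2i+2}, f_i) for every 1 ≤ i ≤ g−2; the chain relations (c_{2i+2}*e_i*c_{2i+2}*f_i)^3 = δ_i*δ_{i+1} for every odd i with 1 ≤ i ≤ g−3, and (c_{2g+1}*c_{2g})^6 = δ_{g−1}; the lantern relations δ₁*x₁*c₃ = c₁*c₁*e₁*f₁, δ_i*x_i*c_{2i+1} = e_{i−1}*f_{i−1}*e_i*f_i for every 2 ≤ i ≤ g−2, and δ_{g−1}*x_{g−1}*c_{2g−1} = e_{g−2}*f_{g−2}*c_{2g+1}*c_{2g+1}; that every δ_i commutes with every other listed element (including every δ_j); and the commutations: e_i commutes with f_i for all i; e_i and f_i commute with e_j and f_j for all j ≠ i, with x_j for all j, and with c_k for all k ≠ 2i+2; and c₁ commutes with x₁ and c₃. Set d = c₁*c₂*c₁⁻¹ and r_j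 = f_j⁻¹*c_{2j+2}*f_j. Then (c₁*c₂)^2 * ∏_{i=1}^{g−2} (c_{2i+2}*e_i*c_{2i+2}*f_i)^{ε_i} * ((c_{2g+1}*c_{2g})^2)⁻¹, where ε_i = −1 for odd i and ε_i = +1 for even i and the factors are taken in increasing order of i, equals c₁ * d * ∏_{odd j, 1 ≤ j ≤ g−3} ( x_j * c_{2j+1} * r_j * e_j * e_j * c_{2j+2} * x_{j+1} * c_{2j+3} * f_{j+1}⁻¹ * c_{2j+4} ) * x_{g−1} * c_{2g−1} * c_{2g} * c_{2g+1} * c_{2g+1} * c_{2g} * c_{2g+1} * c_{2g}, where again the factors of the product are taken in increasing order of j. -/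
/-- A consequence of the braid relation between `a` and `b` for the word `(b * a) ^ 4`. -/
theorem braid_mul_pow_four {G : Type*} [Group G] {a b : G} (h : a * b * a = b * a * b) :
    (b * a) ^ 4 = b * b * a * b * b * a * b * a := by
  calc (b * a) ^ 4 = b * (a * b * a) * b * a * b * a := by
        simp only [pow_succ, pow_zero, one_mul, mul_assoc]
    _ = b * b * a * b * b * a * b * a := by rw [h]; simp only [mul_assoc]

/-- A negative chain word followed by a positive one, rewritten by means of two lantern relations
and one chain relation. -/
theorem mul_chain_inv_mul_chain {G : Type*} [Group G] {p c e f u x c' e' f' v y d d' : G}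
    (hce : c * e * c = e * c * e) (hce' : c' * e' * c' = e' * c' * e')
    (hef : Commute e f) (hchain : (c * e * c * f) ^ 3 = d * d')
    (hl : d * x * u = p * e * f) (hl' : d' * y * v = e * f * e' * f')
    (hdp : Commute d p) (hdd' : Commute d d')
    (hd'c : Commute d' c) (hd'e : Commute d' e) (hd'f : Commute d' f) :
    p * ((c * e * c * f)⁻¹ * (c' * e' * c' * f')) =
      x * u * (f⁻¹ * c * f) * e * e * c * y * v * f'⁻¹ * c' * (e' * f') := by
  have hsq : (c * e * c * f) ^ 2 = e * (c * f * e * e * c) * e * f := by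
    calc (c * e * c * f) ^ 2 = (c * e * c) * f * (c * e * c) * f := by
          simp only [pow_two, mul_assoc]
      _ = e * c * (e * f) * e * c * e * f := by rw [hce]; simp only [mul_assoc]
      _ = e * (c * f * e * e * c) * e * f := by rw [hef.eq]; simp only [mul_assoc]
  have hinv : (c * e * c * f)⁻¹ = d⁻¹ * d'⁻¹ * (c * e * c * f) ^ 2 := by
    rw [← mul_inv_rev, ← hdd'.eq, ← hchain]
    group
  have hxu : x * u = d⁻¹ * p * e * f := by
    rw [mul_assoc, mul_assoc, ← mul_assoc p, ← hl]
    group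
  have hyv : y * v = d'⁻¹ * (e * f * e' * f') := by
    rw [← hl']
    group
  have hd' : Commute d'⁻¹ (e * (c * f * e * e * c)) :=
    (hd'e.mul_right ((((hd'c.mul_right hd'f).mul_right hd'e).mul_right hd'e).mul_right
      hd'c)).inv_left
  calc p * ((c * e * c * f)⁻¹ * (c' * e' * c' * f'))
      = (p * d⁻¹) * (d'⁻¹ * (e * (c * f * e * e * c))) * (e * f * (e' * c' * e' * f')) := by
        rw [hinv, hsq, hce']; simp only [mul_assoc]
    _ = (d⁻¹ * p) * ((e * (c * f * e * e * c)) * d'⁻¹) * (e * f * (e' * c' * e' * f')) := by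
        rw [hd'.eq, hdp.inv_left.eq]
    _ = (d⁻¹ * p * e * f) * (f⁻¹ * c * f) * e * e * c * (d'⁻¹ * (e * f * e' * f')) * f'⁻¹ *
          c' * (e' * f') := by group
    _ = _ := by rw [← hxu, ← hyv]; simp only [mul_assoc]

/-- Telescoping of an alternating product along pairs of consecutive indices. -/
theorem mul_prod_Ico_alternating {G : Type*} [Group G] (A B E : ℕ → G) (m : ℕ)
    (h : ∀ k < m, E (2 * k) * ((A (2 * k + 1))⁻¹ * A (2 * k + 2)) =
      B (2 * k + 1) * E (2 * k + 2)) :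
    E 0 * ((List.Ico 1 (2 * m + 1)).map (fun i => if Odd i then (A i)⁻¹ else A i)).prod =
      (((List.Ico 1 (2 * m + 1)).filter (fun j => Odd j)).map B).prod * E (2 * m) := by
  induction m with
  | zero => simp
  | succ m ih =>
    have hIco : List.Ico 1 (2 * (m + 1) + 1) = List.Ico 1 (2 * m + 1) ++ [2 * m + 1, 2 * m + 2] := by
      rw [show 2 * (m + 1) + 1 = 2 * m + 1 + 1 + 1 by ring, List.Ico.succ_top (by omega),
        List.Ico.succ_top (by omega)]
      simp
    have hodd : Odd (2 * m + 1) := odd_two_mul_add_one m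
    have heven : ¬ Odd (2 * m + 2) := by simp [Nat.odd_add]
    have hstep := h m (Nat.lt_succ_self m)
    have ih := ih fun k hk => h k (hk.trans (Nat.lt_succ_self m))
    rw [hIco, List.map_append, List.prod_append, ← mul_assoc, ih, List.filter_append,
      List.map_append, List.prod_append]
    simp only [List.map_cons, List.map_nil, List.prod_cons, List.prod_nil, mul_one, hodd, heven,
      if_true, if_false, List.filter_cons, List.filter_nil, decide_true, decide_false,
      Bool.false_eq_true, mul_assoc, mul_add]
    rw [hstep]

theorem even_genus_word {G : Type*} [Group G] (g : ℕ) (hg4 : 4 ≤ g) (hgeven : Even g)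
    (c e f x δ : ℕ → G)
    (hb₁ : c 1 * c 2 * c 1 = c 2 * c 1 * c 2)
    (hb₂ : c (2*g) * c (2*g+1) * c (2*g) = c (2*g+1) * c (2*g) * c (2*g+1))
    (hbe : ∀ i, 1 ≤ i → i ≤ g - 2 →
      c (2*i+2) * e i * c (2*i+2) = e i * c (2*i+2) * e i)
    (hbf : ∀ i, 1 ≤ i → i ≤ g - 2 →
      c (2*i+2) * f i * c (2*i+2) = f i * c (2*i+2) * f i)
    (hchain : ∀ i, Odd i → 1 ≤ i → i ≤ g - 3 →
      (c (2*i+2) * e i * c (2*i+2) * f i) ^ 3 = δ i * δ (i+1))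
    (hchain' : (c (2*g+1) * c (2*g)) ^ 6 = δ (g-1))
    (hlantern₁ : δ 1 * x 1 * c 3 = c 1 * c 1 * e 1 * f 1)
    (hlantern : ∀ i, 2 ≤ i → i ≤ g - 2 →
      δ i * x i * c (2*i+1) = e (i-1) * f (i-1) * e i * f i)
    (hlantern' : δ (g-1) * x (g-1) * c (2*g-1)
      = e (g-2) * f (g-2) * c (2*g+1) * c (2*g+1))
    (hδδ : ∀ i j, 1 ≤ i → i ≤ g-1 → 1 ≤ j → j ≤ g-1 → δ i * δ j = δ j * δ i)
    (hδc : ∀ i k, 1 ≤ i → i ≤ g-1 → 1 ≤ k → k ≤ 2*g+1 → δ i * c k = c k * δ i)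
    (hδe : ∀ i k, 1 ≤ i → i ≤ g-1 → 1 ≤ k → k ≤ g-2 → δ i * e k = e k * δ i)
    (hδf : ∀ i k, 1 ≤ i → i ≤ g-1 → 1 ≤ k → k ≤ g-2 → δ i * f k = f k * δ i)
    (hδx : ∀ i k, 1 ≤ i → i ≤ g-1 → 1 ≤ k → k ≤ g-1 → δ i * x k = x k * δ i)
    (hef : ∀ i, 1 ≤ i → i ≤ g-2 → e i * f i = f i * e i)
    (hee : ∀ i j, 1 ≤ i → i ≤ g-2 → 1 ≤ j → j ≤ g-2 → i ≠ j → e i * e j = e j * e i)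
    (hef' : ∀ i j, 1 ≤ i → i ≤ g-2 → 1 ≤ j → j ≤ g-2 → i ≠ j → e i * f j = f j * e i)
    (hff : ∀ i j, 1 ≤ i → i ≤ g-2 → 1 ≤ j → j ≤ g-2 → i ≠ j → f i * f j = f j * f i)
    (hex : ∀ i j, 1 ≤ i → i ≤ g-2 → 1 ≤ j → j ≤ g-1 → e i * x j = x j * e i)
    (hfx : ∀ i j, 1 ≤ i → i ≤ g-2 → 1 ≤ j → j ≤ g-1 → f i * x j = x j * f i)
    (hec : ∀ i k, 1 ≤ i → i ≤ g-2 → 1 ≤ k → k ≤ 2*g+1 → k ≠ 2*i+2 →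
      e i * c k = c k * e i)
    (hfc : ∀ i k, 1 ≤ i → i ≤ g-2 → 1 ≤ k → k ≤ 2*g+1 → k ≠ 2*i+2 →
      f i * c k = c k * f i)
    (hc₁x : c 1 * x 1 = x 1 * c 1)
    (hc₁c₃ : c 1 * c 3 = c 3 * c 1) :
    (c 1 * c 2) ^ 2 *
      ((List.Ico 1 (g-1)).map (fun i =>
        if Odd i then (c (2*i+2) * e i * c (2*i+2) * f i)⁻¹
        else c (2*i+2) * e i * c (2*i+2) * f i)).prod *
      ((c (2*g+1) * c (2*g)) ^ 2)⁻¹ =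
    c 1 * (c 1 * c 2 * (c 1)⁻¹) *
      (((List.Ico 1 (g-2)).filter (fun j => Odd j)).map (fun j =>
        x j * c (2*j+1) * ((f j)⁻¹ * c (2*j+2) * f j) * e j * e j * c (2*j+2) *
          x (j+1) * c (2*j+3) * (f (j+1))⁻¹ * c (2*j+4))).prod *
      x (g-1) * c (2*g-1) * c (2*g) * c (2*g+1) * c (2*g+1) * c (2*g) * c (2*g+1) *
      c (2*g) := by
  obtain ⟨m, rfl⟩ : ∃ m, g = 2 * m + 2 := by
    obtain ⟨n, rfl⟩ := hgeven
    exact ⟨n - 1, by omega⟩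
  have hprefix : (c 1 * c 2) ^ 2 = c 1 * (c 1 * c 2 * (c 1)⁻¹) * (c 1 * c 1) := by
    calc (c 1 * c 2) ^ 2 = c 1 * (c 2 * c 1 * c 2) := by simp only [pow_two, mul_assoc]
      _ = c 1 * (c 1 * c 2 * (c 1)⁻¹) * (c 1 * c 1) := by rw [← hb₁]; group
  have htele := mul_prod_Ico_alternating (fun i => c (2*i+2) * e i * c (2*i+2) * f i)
    (fun j => x j * c (2*j+1) * ((f j)⁻¹ * c (2*j+2) * f j) * e j * e j * c (2*j+2) *
          x (j+1) * c (2*j+3) * (f (j+1))⁻¹ * c (2*j+4))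
    (fun i => if i = 0 then c 1 * c 1 else e i * f i) m (by
      intro k hk
      apply mul_chain_inv_mul_chain (d := δ (2*k+1)) (d' := δ (2*k+2))
        (hbe _ (by omega) (by omega)) (hbe _ (by omega) (by omega))
        (hef _ (by omega) (by omega))
        (hchain _ (odd_two_mul_add_one k) (by omega) (by omega))
        ?_ (hlantern (2*k+2) (by omega) (by omega)) ?_
        (hδδ _ _ (by omega) (by omega) (by omega) (by omega))
        (hδc _ _ (by omega) (by omega) (by omega) (by omega))
        (hδe _ _ (by omega) (by omega) (by omega) (by omega))
        (hδf _ _ (by omega) (by omega) (by omega) (by omega))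
      · rcases Nat.eq_zero_or_pos k with rfl | hk0
        · exact hlantern₁
        · rw [if_neg (by omega)]
          exact hlantern (2*k+1) (by omega) (by omega)
      · split_ifs with h0
        · have h1 : Commute (δ (2*k+1)) (c 1) :=
            hδc _ _ (by omega) (by omega) (by omega) (by omega)
          exact h1.mul_right h1
        · exact Commute.mul_right (hδe _ _ (by omega) (by omega) (by omega) (by omega))
            (hδf _ _ (by omega) (by omega) (by omega) (by omega)))
  have hm0 : 2 * m ≠ 0 := by omega
  have hfilter : (List.Ico 1 (2 * m + 1)).filter (fun j => Odd j) =
      (List.Ico 1 (2 * m)).filter (fun j => Odd j) := by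
    rw [List.Ico.succ_top (by omega), List.filter_append]
    simp
  rw [hfilter] at htele
  simp only [if_true, if_neg hm0] at htele
  rw [show 2 * m + 2 - 1 = 2 * m + 1 by omega] at hchain' hlantern' ⊢
  rw [show 2 * m + 2 - 2 = 2 * m by omega] at hlantern' ⊢
  generalize 2 * (2 * m + 2) - 1 = k at hlantern' ⊢
  generalize c (2 * (2 * m + 2)) = a at *
  generalize c (2 * (2 * m + 2) + 1) = b at *
  have hlast : e (2*m) * f (2*m) * ((b * a) ^ 2)⁻¹ =
      x (2*m+1) * c k * a * b * b * a * b * a := by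
    have hδbb : Commute (δ (2*m+1)) (e (2*m) * f (2*m)) :=
      Commute.mul_right (hδe _ _ (by omega) (by omega) (by omega) (by omega))
        (hδf _ _ (by omega) (by omega) (by omega) (by omega))
    have hxc : x (2*m+1) * c k = (δ (2*m+1))⁻¹ * (e (2*m) * f (2*m)) * (b * b) := by
      rw [mul_assoc, ← mul_assoc _ b b, ← hlantern']
      group
    calc e (2*m) * f (2*m) * ((b * a) ^ 2)⁻¹
        = e (2*m) * f (2*m) * (((b * a) ^ 6)⁻¹ * (b * a) ^ 4) := by group
      _ = (δ (2*m+1))⁻¹ * (e (2*m) * f (2*m)) * (b * b * a * b * b * a * b * a) := by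
        rw [hchain', braid_mul_pow_four hb₂, ← mul_assoc, ← hδbb.inv_left.eq]
      _ = (δ (2*m+1))⁻¹ * (e (2*m) * f (2*m)) * (b * b) * a * b * b * a * b * a := by
        simp only [mul_assoc]
      _ = _ := by rw [← hxc]
  rw [hprefix, mul_assoc _ (c 1 * c 1), htele, ← mul_assoc, mul_assoc _ _ ((b * a) ^ 2)⁻¹, hlast]
  simp only [mul_assoc]
end

section
/- Let G be a group, let g ≥ 5 be an odd integer, and let c₁, …, c_{2g+1}, e₁, …, e_{g−2}, f₁, …, f_{g−2}, x₁, …, x_{g−1}, δ₁, …, δ_{g−1} ∈ G. Assume: the braid relations a*b*a = b*a*b for the pairs (c₁, c₂), (c_{2g}, c_{2g+1}), and (c_{2i+2}, e_i), (c_{2i+2}, f_i) for every 1 ≤ i ≤ g−2; the chain relations (c_{2i+2}*e_i*c_{2i+2}*f_i)^3 = δ_i*δ_{i+1} for every odd i with 1 ≤ i ≤ g−2; the lantern relations δ₁*x₁*c₃ = c₁*c₁*e₁*f₁, δ_i*x_i*c_{2i+1} = e_{i−1}*f_{i−1}*e_i*f_i for every 2 ≤ i ≤ g−2, and δ_{g−1}*x_{g−1}*c_{2g−1}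 = e_{g−2}*f_{g−2}*c_{2g+1}*c_{2g+1}; that every δ_i commutes with every other listed element (including every δ_j); and the commutations: e_i commutes with f_i for all i; e_i and f_i commute with e_j and f_j for all j ≠ i, with x_j for all j, and with c_k for all k ≠ 2i+2; and c₁ commutes with x₁ and c₃. Set d = c₁*c₂*c₁⁻¹ and r_j = f_j⁻¹*c_{2j+2}*f_j. Then (c₁*c₂)^2 * ∏_{i=1}^{g−2} (c_{2i+2}*e_i*c_{2i+2}*f_i)^{ε_i} * (c_{2g+1}*c_{2g})^2, where ε_i = −1 for odd i and ε_i = +1 for even i and the factors are taken in increasing order of i, equals c₁ * d * ∏_{odd j, 1 ≤ j ≤ g−4} ( x_j * c_{2j+1} * r_j * e_j * e_j * c_{2j+2} * x_{j+1} * c_{2j+3} * f_{j+1}⁻¹ * c_{2j+4} ) * x_{g−2} * c_{2g−3} * r_{g−2} * e_{g−2} * e_{g−2} * c_{2g−2} * x_{g−1} * c_{2g−1} * c_{2g} * c_{2g+1}, where again the factors of the product are taken in increasing order of j. -/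
/-- If `a` and `b` braid, the chain word `a b a f` can be written with a copy of `b f` at either
end. -/
theorem chain_word_eq {G : Type*} [Group G] {a b f : G} (hb : a * b * a = b * a * b) :
    a * b * a * f = b * f * f⁻¹ * a * (b * f) := by
  rw [hb, mul_inv_cancel_right]; simp only [mul_assoc]

theorem chain_word_sq {G : Type*} [Group G] {a b f : G} (hb : a * b * a = b * a * b)
    (hbf : b * f = f * b) :
    (a * b * a * f) ^ 2 = b * f * (f⁻¹ * a * f * b * b * a) * (b * f) := by
  have h : f * (b * (b * (a * (b * f)))) = b * (f * (b * (a * (b * f)))) := by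
    rw [← mul_assoc, ← hbf, mul_assoc]
  rw [hb, sq]
  simp only [mul_assoc, mul_inv_cancel_left, h]

/-- The inverse of a chain word, flanked by the outer halves `u` and `v` of two lantern relations,
becomes a positive word up to conjugating `a` by `f`. -/
theorem lantern_chain_lantern {G : Type*} [Group G] {a b f p q y z u v : G}
    (hb : a * b * a = b * a * b) (hbf : b * f = f * b)
    (hchain : (a * b * a * f) ^ 3 = p * q)
    (hu : p * y = u * (b * f)) (hv : q * z = b * f * v)
    (hpy : Commute p y) (hpb : Commute p b) (hpf : Commute p f)
    (hqa : Commute q a) (hqb : Commute q b) (hqf : Commute q f) :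
    u * (a * b * a * f)⁻¹ * v = y * (f⁻¹ * a * f * b * b * a) * z := by
  have hsq := chain_word_sq hb hbf
  set w := a * b * a * f
  set t := f⁻¹ * a * f * b * b * a
  have hX : Commute q (b * f)⁻¹ := (hqb.mul_right hqf).inv_right
  have hpX : Commute p (b * f)⁻¹ := (hpb.mul_right hpf).inv_right
  have hqw : Commute q w⁻¹ :=
    (((hqa.mul_right hqb).mul_right hqa).mul_right hqf).inv_right
  have hu' : u = y * (p * (b * f)⁻¹) := by
    rw [← mul_assoc, ← hpy.eq, hu, mul_inv_cancel_right]
  have hv' : v = (b * f)⁻¹ * q * z := by rw [mul_assoc, hv, inv_mul_cancel_left]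
  have ht' : t = (b * f)⁻¹ * w ^ 2 * (b * f)⁻¹ := by rw [hsq]; group
  calc u * w⁻¹ * v = y * (p * (b * f)⁻¹) * w⁻¹ * ((b * f)⁻¹ * q * z) := by rw [← hu', ← hv']
    _ = y * ((b * f)⁻¹ * (p * q) * w⁻¹ * (b * f)⁻¹) * z := by
      rw [hpX.eq, ← hX.eq]
      simp only [mul_assoc]
      rw [← mul_assoc w⁻¹ q, ← hqw.eq, mul_assoc]
    _ = y * t * z := by rw [← hchain, ht', pow_succ w 2, ← mul_assoc (b * f)⁻¹, mul_inv_cancel_right]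

theorem filter_odd_Ico_one (k : ℕ) :
    (List.Ico 1 (2 * k)).filter (fun j => Odd j) = (List.range k).map (fun j => 2 * j + 1) := by
  induction k with
  | zero => simp
  | succ k ih =>
    rw [List.range_succ, List.map_append, ← ih]
    rcases Nat.eq_zero_or_pos k with rfl | hk
    · decide
    · rw [show 2 * (k + 1) = 2 * k + 1 + 1 by ring, List.Ico.succ_top (by omega),
        List.Ico.succ_top (by omega)]
      simp

theorem odd_genus_word {G : Type*} [Group G] (g : ℕ) (hg5 : 5 ≤ g) (hgodd : Odd g)
    (c e f x δ : ℕ → G)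
    (hb₁ : c 1 * c 2 * c 1 = c 2 * c 1 * c 2)
    (hb₂ : c (2*g) * c (2*g+1) * c (2*g) = c (2*g+1) * c (2*g) * c (2*g+1))
    (hbe : ∀ i, 1 ≤ i → i ≤ g - 2 →
      c (2*i+2) * e i * c (2*i+2) = e i * c (2*i+2) * e i)
    (hbf : ∀ i, 1 ≤ i → i ≤ g - 2 →
      c (2*i+2) * f i * c (2*i+2) = f i * c (2*i+2) * f i)
    (hchain : ∀ i, Odd i → 1 ≤ i → i ≤ g - 2 →
      (c (2*i+2) * e i * c (2*i+2) * f i) ^ 3 = δ i * δ (i+1))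
    (hlantern₁ : δ 1 * x 1 * c 3 = c 1 * c 1 * e 1 * f 1)
    (hlantern : ∀ i, 2 ≤ i → i ≤ g - 2 →
      δ i * x i * c (2*i+1) = e (i-1) * f (i-1) * e i * f i)
    (hlantern' : δ (g-1) * x (g-1) * c (2*g-1)
      = e (g-2) * f (g-2) * c (2*g+1) * c (2*g+1))
    (hδδ : ∀ i j, 1 ≤ i → i ≤ g-1 → 1 ≤ j → j ≤ g-1 → δ i * δ j = δ j * δ i)
    (hδc : ∀ i k, 1 ≤ i → i ≤ g-1 → 1 ≤ k → k ≤ 2*g+1 → δ i * c k = c k * δ i)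
    (hδe : ∀ i k, 1 ≤ i → i ≤ g-1 → 1 ≤ k → k ≤ g-2 → δ i * e k = e k * δ i)
    (hδf : ∀ i k, 1 ≤ i → i ≤ g-1 → 1 ≤ k → k ≤ g-2 → δ i * f k = f k * δ i)
    (hδx : ∀ i k, 1 ≤ i → i ≤ g-1 → 1 ≤ k → k ≤ g-1 → δ i * x k = x k * δ i)
    (hef : ∀ i, 1 ≤ i → i ≤ g-2 → e i * f i = f i * e i)
    (hee : ∀ i j, 1 ≤ i → i ≤ g-2 → 1 ≤ j → j ≤ g-2 → i ≠ j → e i * e j = e j * e i)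
    (hef' : ∀ i j, 1 ≤ i → i ≤ g-2 → 1 ≤ j → j ≤ g-2 → i ≠ j → e i * f j = f j * e i)
    (hff : ∀ i j, 1 ≤ i → i ≤ g-2 → 1 ≤ j → j ≤ g-2 → i ≠ j → f i * f j = f j * f i)
    (hex : ∀ i j, 1 ≤ i → i ≤ g-2 → 1 ≤ j → j ≤ g-1 → e i * x j = x j * e i)
    (hfx : ∀ i j, 1 ≤ i → i ≤ g-2 → 1 ≤ j → j ≤ g-1 → f i * x j = x j * f i)
    (hec : ∀ i k, 1 ≤ i → i ≤ g-2 → 1 ≤ k → k ≤ 2*g+1 → k ≠ 2*i+2 →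
      e i * c k = c k * e i)
    (hfc : ∀ i k, 1 ≤ i → i ≤ g-2 → 1 ≤ k → k ≤ 2*g+1 → k ≠ 2*i+2 →
      f i * c k = c k * f i)
    (hc₁x : c 1 * x 1 = x 1 * c 1)
    (hc₁c₃ : c 1 * c 3 = c 3 * c 1) :
    (c 1 * c 2) ^ 2 *
      ((List.Ico 1 (g-1)).map (fun i =>
        if Odd i then (c (2*i+2) * e i * c (2*i+2) * f i)⁻¹
        else c (2*i+2) * e i * c (2*i+2) * f i)).prod *
      (c (2*g+1) * c (2*g)) ^ 2 =
    c 1 * (c 1 * c 2 * (c 1)⁻¹) *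
      (((List.Ico 1 (g-3)).filter (fun j => Odd j)).map (fun j =>
        x j * c (2*j+1) * ((f j)⁻¹ * c (2*j+2) * f j) * e j * e j * c (2*j+2) *
          x (j+1) * c (2*j+3) * (f (j+1))⁻¹ * c (2*j+4))).prod *
      x (g-2) * c (2*g-3) * ((f (g-2))⁻¹ * c (2*(g-2)+2) * f (g-2)) * e (g-2) * e (g-2) *
      c (2*g-2) * x (g-1) * c (2*g-1) * c (2*g) * c (2*g+1) := by
  obtain ⟨n, rfl⟩ : ∃ n, g = 2 * n + 3 := by
    obtain ⟨m, rfl⟩ := hgodd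
    exact ⟨m - 1, by omega⟩
  have hg₁ : 2 * n + 3 - 1 = 2 * n + 2 := by omega
  have hg₂ : 2 * n + 3 - 2 = 2 * n + 1 := by omega
  have hg₃ : 2 * n + 3 - 3 = 2 * n := by omega
  have hg₄ : 2 * (2 * n + 3) - 1 = 4 * n + 5 := by omega
  have hg₅ : 2 * (2 * n + 3) - 2 = 4 * n + 4 := by omega
  have hg₆ : 2 * (2 * n + 3) - 3 = 4 * n + 3 := by omega
  simp only [hg₁, hg₂, hg₃, hg₄, hg₅, hg₆] at *
  clear hg₁ hg₂ hg₃ hg₄ hg₅ hg₆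
  -- the left half of the lantern relation number `i + 1`
  let u : ℕ → G := fun i => if i = 0 then c 1 * c 1 else e i * f i
  have hu : ∀ i, i ≤ 2 * n →
      δ (i+1) * (x (i+1) * c (2*(i+1)+1)) = u i * (e (i+1) * f (i+1)) := by
    intro i hi
    rcases Nat.eq_zero_or_pos i with rfl | hi0
    · simpa [u, mul_assoc] using hlantern₁
    · have := hlantern (i+1) (by omega) (by omega)
      simpa [u, hi0.ne', mul_assoc] using this
  have key : ∀ (k : ℕ) (z v : G), k ≤ n →
      δ (2*k+2) * z = e (2*k+1) * f (2*k+1) * v →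
      u (2*k) * (c (2*(2*k+1)+2) * e (2*k+1) * c (2*(2*k+1)+2) * f (2*k+1))⁻¹ * v =
        x (2*k+1) * c (2*(2*k+1)+1) * ((f (2*k+1))⁻¹ * c (2*(2*k+1)+2) * f (2*k+1) *
          e (2*k+1) * e (2*k+1) * c (2*(2*k+1)+2)) * z := by
    intro k z v hk hv
    refine lantern_chain_lantern (hbe _ ?_ ?_) (hef _ ?_ ?_) (hchain _ ⟨k, rfl⟩ ?_ ?_)
      (hu _ ?_) hv (Commute.mul_right (hδx _ _ ?_ ?_ ?_ ?_) (hδc _ _ ?_ ?_ ?_ ?_))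
      (hδe _ _ ?_ ?_ ?_ ?_) (hδf _ _ ?_ ?_ ?_ ?_) (hδc _ _ ?_ ?_ ?_ ?_)
      (hδe _ _ ?_ ?_ ?_ ?_) (hδf _ _ ?_ ?_ ?_ ?_) <;> omega
  have main : ∀ k, k ≤ n →
      c 1 * c 1 * ((List.Ico 1 (2*k+1)).map (fun i =>
        if Odd i then (c (2*i+2) * e i * c (2*i+2) * f i)⁻¹
        else c (2*i+2) * e i * c (2*i+2) * f i)).prod =
      (((List.Ico 1 (2*k)).filter (fun j => Odd j)).map (fun j =>
        x j * c (2*j+1) * ((f j)⁻¹ * c (2*j+2) * f j) * e j * e j * c (2*j+2) *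
          x (j+1) * c (2*j+3) * (f (j+1))⁻¹ * c (2*j+4))).prod * u (2*k) := by
    intro k
    simp only [filter_odd_Ico_one]
    induction k with
    | zero => simp [u]
    | succ k ih =>
      intro hk
      have hodd : Odd (2*k+1) := ⟨k, rfl⟩
      have heven : ¬ Odd (2*k+2) := by simp [Nat.odd_add]
      have hstep := key k _ _ (by omega) (by
        have := hu (2*k+1) (by omega)
        rwa [show u (2*k+1) = e (2*k+1) * f (2*k+1) by simp [u]] at this)
      rw [show 2*(k+1)+1 = 2*k+1+1+1 by ring, List.Ico.succ_top (by omega),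
        List.Ico.succ_top (by omega), List.range_succ]
      simp only [List.map_append, List.prod_append, List.map_cons, List.map_nil,
        List.prod_singleton, if_pos hodd, if_neg heven, Nat.add_assoc (2*k), Nat.reduceAdd]
        at hstep ⊢
      rw [chain_word_eq (hbe (2*k+2) (by omega) (by omega)), ← mul_assoc (c 1 * c 1),
        ← mul_assoc (c 1 * c 1), ih (by omega),
        show u (2*(k+1)) = e (2*k+2) * f (2*k+2) by simp [u, mul_add]]
      have hstep' := congrArg (fun t => t * (f (2*k+2))⁻¹ * c (2*(2*k+2)+2) *
        (e (2*k+2) * f (2*k+2))) hstep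
      simp only [mul_assoc] at hstep' ⊢
      rw [hstep']
      simp only [show 2*(2*k+2)+1 = 2*(2*k+1)+3 by ring,
        show 2*(2*k+2)+2 = 2*(2*k+1)+4 by ring]
  have hlast := key n (x (2*n+2) * c (4*n+5)) (c (2*(2*n+3)+1) * c (2*(2*n+3)+1)) le_rfl
    (by simpa only [mul_assoc] using hlantern')
  have hstart : (c 1 * c 2) ^ 2 = c 1 * (c 1 * c 2 * (c 1)⁻¹) * (c 1 * c 1) := by
    have := congrArg (c 1 * ·) hb₁
    simp only [mul_assoc] at this
    simp only [sq, mul_assoc, inv_mul_cancel_left, this]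
  have hend : (c (2*(2*n+3)+1) * c (2*(2*n+3))) ^ 2 =
      c (2*(2*n+3)+1) * c (2*(2*n+3)+1) * c (2*(2*n+3)) * c (2*(2*n+3)+1) := by
    have := congrArg (c (2*(2*n+3)+1) * ·) hb₂
    simp only [mul_assoc] at this
    simp only [sq, mul_assoc, this]
  have hmain := main n le_rfl
  rw [hstart, hend, List.Ico.succ_top (by omega), List.map_append, List.prod_append,
    List.map_singleton, List.prod_singleton, if_pos ⟨n, rfl⟩]
  have hcongr := congrArg₂ (fun s t => c 1 * (c 1 * c 2 * (c 1)⁻¹) * s * t) hmain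
    (Eq.refl ((c (2*(2*n+1)+2) * e (2*n+1) * c (2*(2*n+1)+2) * f (2*n+1))⁻¹ *
      (c (2*(2*n+3)+1) * c (2*(2*n+3)+1)) * (c (2*(2*n+3)) * c (2*(2*n+3)+1))))
  have hcongr' := congrArg (· * (c (2*(2*n+3)) * c (2*(2*n+3)+1))) hlast
  simp only [mul_assoc] at hcongr hcongr' ⊢
  rw [hcongr, hcongr']
  simp only [show 2*(2*n+1)+1 = 4*n+3 by ring, show 2*(2*n+1)+2 = 4*n+4 by ring]
end
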